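/- Let Ω ⊂ ℂⁿ (n ≥ 2) be a bounded domain and U ⊆ ℂⁿ an open set such that Ω ∩ U is a log-type ℂ-convex domain all of whose boundary points are Dini-smooth. Then for any open set V ⊆ U with closure(V) ⊆ U, there exists K > 0 such that K_Ω(p,q) ≤ K_{Ω∩U}(p,q) ≤ K_Ω(p,q) + K for all p, q ∈ V ∩ Ω. -/

import Mathlib

open Metric Set MeasureTheory Filter Topology

noncomputable section

variable {E : Type*} [NormedAddCommGroup E] [NormedSpace ℂ E]

/-- Distance from `x` to the boundary of `D`. -/
def bdist (D : Set E) (x : E) : ℝ := Metric.infDist x (frontier D)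

/-- Distance from `x` to the boundary of `D` along the complex line `x + ℂ v`. -/
def bdistDir (D : Set E) (x v : E) : ℝ :=
  Metric.infDist x (frontier D ∩ {w | ∃ c : ℂ, w = x + c • v})

/-- The infinitesimal Kobayashi (pseudo-)metric of `D ⊆ E`. -/
def kobMetric (D : Set E) (x v : E) : ℝ :=
  sInf { r : ℝ | ∃ (f : ℂ → E) (ξ : ℂ),
    DifferentiableOn ℂ f (ball (0:ℂ) 1) ∧ MapsTo f (ball (0:ℂ) 1) D ∧
    f 0 = x ∧ ξ • derivWithin f (ball (0:ℂ) 1) 0 = v ∧ r = ‖ξ‖ }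

/-- `σ` is absolutely continuous on `[a,b]`, with a.e. derivative `g`. -/
def IsACWithDeriv (σ g : ℝ → E) (a b : ℝ) : Prop :=
  IntervalIntegrable g volume a b ∧
  ∀ t ∈ Icc a b, σ t = σ a + ∫ s in a..t, g s

/-- The Kobayashi pseudo-distance of `D`, defined via lengths of absolutely
continuous curves (Venturini's description). -/
def kobDist (D : Set E) (x y : E) : ℝ :=
  sInf { r : ℝ | ∃ (a b : ℝ) (σ g : ℝ → E), a ≤ b ∧
    IsACWithDeriv σ g a b ∧ MapsTo σ (Icc a b) D ∧ σ a = x ∧ σ b = y ∧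
    r = ∫ t in a..b, kobMetric D (σ t) (g t) }

/-- Log-type convex domain, with explicit constants `C, ν > 0`. -/
def LogTypeConvexWith (D : Set E) (C ν : ℝ) : Prop :=
  IsOpen D ∧ D.Nonempty ∧ Bornology.IsBounded D ∧ Convex ℝ D ∧ 0 < C ∧ 0 < ν ∧
  ∀ z ∈ D, ∀ v : E, v ≠ 0 →
    bdistDir D z v ≤ C / |Real.log (bdist D z)| ^ (1 + ν)

/-- Log-type convex domain. -/
def LogTypeConvex (D : Set E) : Prop := ∃ C ν : ℝ, LogTypeConvexWith D C ν

/-- A `ℂ`-convex set: every nonempty intersection with a complex affine line is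
connected and simply connected. -/
def CConvex (D : Set E) : Prop :=
  ∀ z v : E, v ≠ 0 → (D ∩ {w | ∃ c : ℂ, w = z + c • v}).Nonempty →
    IsConnected (D ∩ {w | ∃ c : ℂ, w = z + c • v}) ∧
    SimplyConnectedSpace ↥(D ∩ {w | ∃ c : ℂ, w = z + c • v})

/-- Log-type `ℂ`-convex domain. -/
def LogTypeCConvex (D : Set E) : Prop :=
  IsOpen D ∧ D.Nonempty ∧ Bornology.IsBounded D ∧ CConvex D ∧
  ∃ C ν : ℝ, 0 < C ∧ 0 < ν ∧
    ∀ z ∈ D, ∀ v : E, v ≠ 0 →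
      bdistDir D z v ≤ C / |Real.log (bdist D z)| ^ (1 + ν)

/-- `σ : [a,b] → D` (with a.e. derivative `g`) is a `(λ,κ)`-almost geodesic for the
Kobayashi distance of `D`. -/
def AlmostGeodesicOn (D : Set E) (lam kap : ℝ) (σ g : ℝ → E) (a b : ℝ) : Prop :=
  MapsTo σ (Icc a b) D ∧ IsACWithDeriv σ g a b ∧
  (∀ s ∈ Icc a b, ∀ t ∈ Icc a b,
    (1 / lam) * |t - s| - kap ≤ kobDist D (σ s) (σ t) ∧
    kobDist D (σ s) (σ t) ≤ lam * |t - s| + kap) ∧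
  (∀ᵐ t ∂volume, t ∈ Icc a b → kobMetric D (σ t) (g t) ≤ lam)

/-- `σ : [a,b] → D` is a `C`-rough geodesic for the Kobayashi distance of `D`. -/
def RoughGeodesicOn (D : Set E) (C : ℝ) (σ : ℝ → E) (a b : ℝ) : Prop :=
  MapsTo σ (Icc a b) D ∧
  ∀ s ∈ Icc a b, ∀ t ∈ Icc a b,
    |t - s| - C ≤ kobDist D (σ s) (σ t) ∧ kobDist D (σ s) (σ t) ≤ |t - s| + C

/-- `ρ` is a `C¹` local defining function for `D` near `ξ` on the open set `W`. -/
def IsLocalDefiningFn (D : Set E) (ξ : E) (W : Set E) (ρ : E → ℝ) : Prop :=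
  IsOpen W ∧ ξ ∈ W ∧ ContDiffOn ℝ 1 ρ W ∧ (∀ x ∈ W, fderiv ℝ ρ x ≠ 0) ∧
  D ∩ W = {x ∈ W | ρ x < 0} ∧ frontier D ∩ W = {x ∈ W | ρ x = 0}

/-- `ξ` is a Dini-smooth boundary point of `D`: the boundary is `C¹` near `ξ` and the
unit normal admits a modulus of continuity `ω` satisfying the Dini condition. -/
def DiniSmoothBoundaryPoint (D : Set E) (ξ : E) : Prop :=
  ∃ (W : Set E) (ρ : E → ℝ) (ω : ℝ → ℝ),
    IsLocalDefiningFn D ξ W ρ ∧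
    (∀ t ∈ Icc (0:ℝ) 1, 0 ≤ ω t) ∧ MonotoneOn ω (Icc (0:ℝ) 1) ∧
    IntegrableOn (fun t => ω t / t) (Ioc (0:ℝ) 1) ∧
    ∀ x ∈ frontier D ∩ W, ∀ y ∈ frontier D ∩ W, ‖x - y‖ ≤ 1 →
      ‖(‖fderiv ℝ ρ x‖)⁻¹ • fderiv ℝ ρ x - (‖fderiv ℝ ρ y‖)⁻¹ • fderiv ℝ ρ y‖ ≤ ω ‖x - y‖

/-- `D` has `C^{1,ε}` boundary: near every boundary point there is a `C¹` defining
function whose differential is `ε`-Hölder. -/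
def HolderC1Boundary (D : Set E) (ε : ℝ) : Prop :=
  ∀ ξ ∈ frontier D, ∃ (W : Set E) (ρ : E → ℝ) (M : ℝ), 0 < M ∧
    IsLocalDefiningFn D ξ W ρ ∧
    ∀ x ∈ W, ∀ y ∈ W, ‖fderiv ℝ ρ x - fderiv ℝ ρ y‖ ≤ M * ‖x - y‖ ^ ε

/-- The complex affine tangent hyperplane of `∂D` at `x`, computed from a local
defining function `ρ`. -/
def complexTangentHyperplane (ρ : E → ℝ) (x : E) : Set E :=
  {w : E | fderiv ℝ ρ x (w - x) = 0 ∧ fderiv ℝ ρ x ((Complex.I : ℂ) • (w - x)) = 0}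

/-- The Gromov product of `x` and `y` with respect to the base point `o`, for the
Kobayashi distance of `D`. -/
def gromovProd (D : Set E) (o x y : E) : ℝ :=
  (kobDist D x o + kobDist D o y - kobDist D x y) / 2

end

/-!
Put `D = Ω ∩ U`. Only the upper bound needs work, and it compares the infinitesimal metrics along
curves in `Ω` that are minimal for the Kobayashi length up to an additive error.

Since `∂D` is `C¹` and `D` is `ℂ`-convex, the complex tangent hyperplane at each boundary point
avoids `D`, and inside `D` one can move away from the boundary at a uniform rate. Integrating along
such segments, `K_D(x, y)` is at most a constant times `l x + l y`, where the depth `l` is `-log` of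
the boundary distance. Conversely, the Schwarz lemma and the log-type condition
give `‖v‖ ≲ l x ^ (-(1 + ν)) * k_Ω(x; v)` at points `x` of `D` near which `Ω` and `D` agree. Along a
radius of an analytic disc in `Ω` the functionals defining the supporting hyperplanes show that the
depth decays at most linearly in hyperbolic length. So the disc of radius `1 - l x ^ (-(1 + ν))` is
mapped close to the centre `x`, hence into `D`, which is the Royden-type localization
`k_D(x; v) ≤ (1 + C * l x ^ (-(1 + ν))) * k_Ω(x; v)`.

Along a near-minimal curve the depth grows at least linearly in the arc length measured from its
shallowest point, by the first estimate, so `l ^ (-(1 + ν))` is integrable in arc length. Hence such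
a curve costs only a bounded amount more in `D` than in `Ω` while it stays in the region of
agreement, and if its end points are a definite distance apart it visits a fixed compact subset of
`D` (visibility). A near-minimal curve that leaves the region of agreement therefore passes through
this compact set both before and after; replacing the part in between by a curve in `D` of bounded
length changes the length by a bounded amount.
-/

section KobayashiMetric

variable {E : Type*} [NormedAddCommGroup E] [NormedSpace ℂ E] {D D' : Set E} {f : ℂ → E} {x v : E}

/-- An analytic disc in `D` centred at `x`: a competitor in the definition of `kobMetric D x`. -/
structure IsDisc (D : Set E) (f : ℂ → E) (x : E) : Prop where
  differentiableOn : DifferentiableOn ℂ f (ball 0 1)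
  mapsTo : MapsTo f (ball 0 1) D
  map_zero : f 0 = x

theorem IsDisc.mono (hf : IsDisc D f x) (h : D ⊆ D') : IsDisc D' f x :=
  ⟨hf.differentiableOn, hf.mapsTo.mono_right h, hf.map_zero⟩

theorem IsDisc.hasDerivAt_zero (hf : IsDisc D f x) : HasDerivAt f (deriv f 0) 0 :=
  (hf.differentiableOn.differentiableAt (ball_mem_nhds 0 one_pos)).hasDerivAt

theorem isDisc_const (hx : x ∈ D) : IsDisc D (fun _ => x) x :=
  ⟨by fun_prop, fun _ _ => hx, rfl⟩

theorem IsDisc.hasDerivAt_dilate_add_affine (hf : IsDisc D f x) (ρ : ℂ) (u w : E) :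
    HasDerivAt (fun z => f (ρ * z) + (u + z • w)) (ρ • deriv f 0 + w) 0 := by
  have hdil : HasDerivAt (fun z : ℂ => ρ * z) ρ 0 := by
    simpa using (hasDerivAt_id (0 : ℂ)).const_mul ρ
  have hfd : HasDerivAt f (deriv f 0) (ρ * 0) := by simpa using hf.hasDerivAt_zero
  have haff : HasDerivAt (fun z : ℂ => u + z • w) w 0 := by
    simpa using ((hasDerivAt_id (0 : ℂ)).smul_const w).const_add u
  exact (hfd.scomp 0 hdil).add haff

theorem norm_add_smul_le (u w : E) {z : ℂ} (hz : ‖z‖ ≤ 1) : ‖u + z • w‖ ≤ ‖u‖ + ‖w‖ := by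
  refine (norm_add_le _ _).trans ?_
  rw [norm_smul]
  gcongr
  exact mul_le_of_le_one_left (norm_nonneg w) hz

theorem IsDisc.exists_dilate_add_affine (hf : IsDisc D f x) (hD : IsOpen D) {ρ : ℝ}
    (hρ₀ : 0 ≤ ρ) (hρ₁ : ρ < 1) :
    ∃ ε > 0, ∀ u w : E, ‖u‖ + ‖w‖ < ε → IsDisc D (fun z => f (ρ * z) + (u + z • w)) (x + u) := by
  have hsub : closedBall (0 : ℂ) ρ ⊆ ball 0 1 := closedBall_subset_ball hρ₁
  have hK : IsCompact (f '' closedBall (0 : ℂ) ρ) :=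
    (isCompact_closedBall _ _).image_of_continuousOn (hf.differentiableOn.continuousOn.mono hsub)
  obtain ⟨ε, hε, hεD⟩ :=
    hK.exists_thickening_subset_open hD (hf.mapsTo.mono_left hsub).image_subset
  have hdil : MapsTo (fun z : ℂ => (ρ : ℂ) * z) (ball 0 1) (closedBall 0 ρ) := fun z hz => by
    simp only [mem_ball, dist_zero_right] at hz
    simpa [abs_of_nonneg hρ₀] using mul_le_of_le_one_right hρ₀ hz.le
  refine ⟨ε, hε, fun u w huw => ⟨?_, fun z hz => hεD ?_, by simp [hf.map_zero]⟩⟩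
  · exact (hf.differentiableOn.comp (by fun_prop) (hdil.mono_right hsub)).add (by fun_prop)
  · refine mem_thickening_iff.2 ⟨f (ρ * z), mem_image_of_mem f (hdil hz), ?_⟩
    rw [dist_self_add_left]
    exact (norm_add_smul_le u w (by simpa using (mem_ball.1 hz).le)).trans_lt huw

theorem derivWithin_ball_zero (f : ℂ → E) : derivWithin f (ball (0 : ℂ) 1) 0 = deriv f 0 :=
  derivWithin_of_isOpen isOpen_ball (by simp)

theorem kobMetric_nonneg (D : Set E) (x v : E) : 0 ≤ kobMetric D x v := by
  apply Real.sInf_nonneg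
  rintro r ⟨f, ξ, -, -, -, -, rfl⟩
  exact norm_nonneg _

theorem IsDisc.kobMetric_le (hf : IsDisc D f x) {ξ : ℂ} (hv : ξ • deriv f 0 = v) :
    kobMetric D x v ≤ ‖ξ‖ := by
  refine csInf_le ⟨0, ?_⟩ ⟨f, ξ, hf.differentiableOn, hf.mapsTo, hf.map_zero, ?_, rfl⟩
  · rintro r ⟨f, ξ, -, -, -, -, rfl⟩
    exact norm_nonneg _
  · rwa [derivWithin_ball_zero]

theorem isDisc_add_smul {r : ℝ} (hb : ball x r ⊆ D) {w : E} (hw : ‖w‖ ≤ r) (hr : 0 < r) :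
    IsDisc D (fun z => x + z • w) x := by
  refine ⟨by fun_prop, fun z hz => hb ?_, by simp⟩
  simp only [mem_ball, dist_zero_right] at hz
  rw [mem_ball, dist_self_add_left, norm_smul]
  nlinarith [norm_nonneg z]

theorem exists_isDisc_of_ball_subset {r : ℝ} (hr : 0 < r) (hb : ball x r ⊆ D) (v : E) :
    ∃ (f : ℂ → E) (ξ : ℂ), IsDisc D f x ∧ ξ • deriv f 0 = v ∧ ‖ξ‖ = ‖v‖ / r := by
  rcases eq_or_ne v 0 with rfl | hv
  · exact ⟨_, 0, isDisc_const (hb (mem_ball_self hr)), by simp, by simp⟩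
  have hv' : 0 < ‖v‖ := norm_pos_iff.2 hv
  refine ⟨fun z => x + z • ((r / ‖v‖ : ℝ) : ℂ) • v, ((‖v‖ / r : ℝ) : ℂ),
    isDisc_add_smul hb ?_ hr, ?_, ?_⟩
  · rw [norm_smul, Complex.norm_real, Real.norm_of_nonneg (by positivity),
      div_mul_cancel₀ _ hv'.ne']
  · have hder : HasDerivAt (fun z : ℂ => x + z • ((r / ‖v‖ : ℝ) : ℂ) • v)
        (((r / ‖v‖ : ℝ) : ℂ) • v) 0 := by
      simpa using ((hasDerivAt_id (0 : ℂ)).smul_const (((r / ‖v‖ : ℝ) : ℂ) • v)).const_add x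
    rw [hder.deriv, smul_smul, ← Complex.ofReal_mul, div_mul_div_cancel₀ hr.ne', div_self hv'.ne',
      Complex.ofReal_one, one_smul]
  · rw [Complex.norm_real, Real.norm_of_nonneg (by positivity)]

theorem kobMetric_le_div {r : ℝ} (hr : 0 < r) (hb : ball x r ⊆ D) (v : E) :
    kobMetric D x v ≤ ‖v‖ / r := by
  obtain ⟨f, ξ, hf, hv, hξ⟩ := exists_isDisc_of_ball_subset hr hb v
  exact hξ ▸ hf.kobMetric_le hv

theorem exists_isDisc_norm_lt (hD : IsOpen D) (hx : x ∈ D) {r : ℝ}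
    (hr : kobMetric D x v < r) :
    ∃ (f : ℂ → E) (ξ : ℂ), IsDisc D f x ∧ ξ • deriv f 0 = v ∧ ‖ξ‖ < r := by
  have hne : ∃ (f : ℂ → E) (ξ : ℂ), IsDisc D f x ∧ ξ • deriv f 0 = v := by
    obtain ⟨s, hs, hb⟩ := Metric.isOpen_iff.1 hD x hx
    obtain ⟨f, ξ, hf, hv, -⟩ := exists_isDisc_of_ball_subset hs hb v
    exact ⟨f, ξ, hf, hv⟩
  obtain ⟨f₀, ξ₀, hf₀, hv₀⟩ := hne
  obtain ⟨_, ⟨f, ξ, hfd, hfm, hf0, hv, rfl⟩, hlt⟩ := exists_lt_of_csInf_lt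
    (by exact ⟨‖ξ₀‖, f₀, ξ₀, hf₀.differentiableOn, hf₀.mapsTo, hf₀.map_zero,
      by rwa [derivWithin_ball_zero], rfl⟩) hr
  exact ⟨f, ξ, ⟨hfd, hfm, hf0⟩, by rwa [derivWithin_ball_zero] at hv, hlt⟩

theorem le_kobMetric (hD : IsOpen D) (hx : x ∈ D) {c : ℝ}
    (h : ∀ (f : ℂ → E) (ξ : ℂ), IsDisc D f x → ξ • deriv f 0 = v → c ≤ ‖ξ‖) :
    c ≤ kobMetric D x v := by
  by_contra! hlt
  obtain ⟨f, ξ, hf, hv, hξ⟩ := exists_isDisc_norm_lt hD hx hlt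
  exact hξ.not_ge (h f ξ hf hv)

theorem kobMetric_mono (hD : IsOpen D) (h : D ⊆ D') (hx : x ∈ D) (v : E) :
    kobMetric D' x v ≤ kobMetric D x v :=
  le_kobMetric hD hx fun _ _ hf hv => (hf.mono h).kobMetric_le hv

theorem kobMetric_neg (hD : IsOpen D) (hx : x ∈ D) (v : E) :
    kobMetric D x (-v) = kobMetric D x v := by
  have hle : ∀ w, kobMetric D x (-w) ≤ kobMetric D x w := fun w =>
    le_kobMetric hD hx fun f ξ hf hw =>
      norm_neg ξ ▸ hf.kobMetric_le (by rw [neg_smul, hw])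
  exact (hle v).antisymm (by simpa using hle (-v))

theorem exists_isDisc_norm_lt_of_ne_zero (hD : IsOpen D) (hx : x ∈ D) {r : ℝ}
    (hr : kobMetric D x v < r) :
    ∃ (f : ℂ → E) (ξ : ℂ), IsDisc D f x ∧ ξ • deriv f 0 = v ∧ ‖ξ‖ < r ∧ ξ ≠ 0 := by
  have hr₀ : 0 < r := (kobMetric_nonneg D x v).trans_lt hr
  obtain ⟨f, ξ, hf, hv, hξ⟩ := exists_isDisc_norm_lt hD hx hr
  rcases eq_or_ne ξ 0 with rfl | hξ₀
  · refine ⟨fun _ => x, ((r / 2 : ℝ) : ℂ), isDisc_const hx, by simpa using hv, ?_, ?_⟩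
    · rw [Complex.norm_real, Real.norm_of_nonneg (by positivity)]
      exact half_lt_self hr₀
    · exact_mod_cast (half_pos hr₀).ne'
  · exact ⟨f, ξ, hf, hv, hξ, hξ₀⟩

theorem upperSemicontinuousOn_kobMetric (hD : IsOpen D) :
    UpperSemicontinuousOn (fun p : E × E => kobMetric D p.1 p.2) (D ×ˢ univ) := by
  rintro ⟨x, v⟩ ⟨hx, -⟩ r hr
  refine nhdsWithin_le_nhds ?_
  obtain ⟨f, ξ, hf, hv, hξr, hξ⟩ := exists_isDisc_norm_lt_of_ne_zero hD hx hr
  have hr₀ : 0 < r := (norm_nonneg ξ).trans_lt hξr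
  obtain ⟨ρ, hξρ, hρ₁⟩ : ∃ ρ : ℝ, ‖ξ‖ / r < ρ ∧ ρ < 1 :=
    exists_between ((div_lt_one hr₀).2 hξr)
  have hρ₀ : 0 < ρ := (by positivity : 0 ≤ ‖ξ‖ / r).trans_lt hξρ
  have hρ : (ρ : ℂ) ≠ 0 := by exact_mod_cast hρ₀.ne'
  obtain ⟨ε, hε, hdisc⟩ := hf.exists_dilate_add_affine hD hρ₀.le hρ₁
  have hnear : ∀ᶠ p : E × E in 𝓝 (x, v), ‖p.1 - x‖ + ‖(ξ / ρ)⁻¹ • (p.2 - v)‖ < ε := by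
    have hc : Continuous fun p : E × E => ‖p.1 - x‖ + ‖(ξ / ρ)⁻¹ • (p.2 - v)‖ := by fun_prop
    exact hc.continuousAt.eventually_lt continuousAt_const (by simpa using hε)
  filter_upwards [hnear] with p hp
  have hfp := hdisc _ _ hp
  rw [add_sub_cancel] at hfp
  refine (hfp.kobMetric_le (ξ := ξ / ρ) ?_).trans_lt ?_
  · rw [(hf.hasDerivAt_dilate_add_affine _ _ _).deriv, smul_add, smul_smul, smul_smul,
      div_mul_cancel₀ _ hρ, mul_inv_cancel₀ (div_ne_zero hξ hρ), one_smul, hv, add_sub_cancel]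
  · rw [norm_div, Complex.norm_real, Real.norm_of_nonneg hρ₀.le, div_lt_comm₀ hρ₀ hr₀]
    exact hξρ

theorem measurable_indicator_kobMetric [MeasurableSpace E] [BorelSpace E]
    [SecondCountableTopology E] (hD : IsOpen D) :
    Measurable ((D ×ˢ univ).indicator fun p : E × E => kobMetric D p.1 p.2) := by
  have hDm : MeasurableSet (D ×ˢ (univ : Set E)) := hD.measurableSet.prod MeasurableSet.univ
  classical
  rw [← piecewise_eq_indicator]
  refine measurable_of_restrict_of_restrict_compl hDm ?_ ?_
  · rw [domRestrict_piecewise]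
    exact (upperSemicontinuousOn_iff_restrict.2 (upperSemicontinuousOn_kobMetric hD)).measurable
  · rw [domRestrict_piecewise_compl]
    exact measurable_const

end KobayashiMetric

section KobayashiLength

variable {E : Type*} [NormedAddCommGroup E] [NormedSpace ℂ E] {D D' : Set E}
  {σ τ g k : ℝ → E} {a b c d : ℝ} {x y z : E} {r s : ℝ}

theorem IsACWithDeriv.continuousOn (h : IsACWithDeriv σ g a b) (hab : a ≤ b) :
    ContinuousOn σ (Icc a b) := by
  have hprim := intervalIntegral.continuousOn_primitive_interval' h.1 left_mem_uIcc
  rw [uIcc_of_le hab] at hprim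
  exact (continuousOn_const.add hprim).congr h.2

theorem IsACWithDeriv.congr (h : IsACWithDeriv σ g a b) (hab : a ≤ b)
    (hσ : EqOn σ τ (Icc a b)) (hg : EqOn g k (Ioc a b)) : IsACWithDeriv τ k a b := by
  refine ⟨h.1.congr (by rwa [uIoc_of_le hab]), fun t ht => ?_⟩
  rw [← hσ ht, ← hσ (left_mem_Icc.2 hab), h.2 t ht]
  congr 1
  refine intervalIntegral.integral_congr_ae (.of_forall fun s hs => ?_)
  rw [uIoc_of_le ht.1] at hs
  exact hg ⟨hs.1, hs.2.trans ht.2⟩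

theorem IsACWithDeriv.intervalIntegrable_of_mem (h : IsACWithDeriv σ g a b) (hab : a ≤ b)
    (hc : c ∈ Icc a b) (hd : d ∈ Icc a b) : IntervalIntegrable g volume c d :=
  h.1.mono_set (by rw [uIcc_of_le hab]; exact uIcc_subset_Icc hc hd)

theorem IsACWithDeriv.restrict (h : IsACWithDeriv σ g a b) (hac : a ≤ c) (hcd : c ≤ d)
    (hdb : d ≤ b) : IsACWithDeriv σ g c d := by
  have hab := hac.trans (hcd.trans hdb)
  have ha : a ∈ Icc a b := left_mem_Icc.2 hab
  have hc : c ∈ Icc a b := ⟨hac, hcd.trans hdb⟩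
  refine ⟨h.intervalIntegrable_of_mem hab hc ⟨hac.trans hcd, hdb⟩, fun t ht => ?_⟩
  have ht' : t ∈ Icc a b := ⟨hac.trans ht.1, ht.2.trans hdb⟩
  rw [h.2 t ht', h.2 c hc, add_assoc, intervalIntegral.integral_add_adjacent_intervals
    (h.intervalIntegrable_of_mem hab ha hc) (h.intervalIntegrable_of_mem hab hc ht')]

theorem IsACWithDeriv.append (h₁ : IsACWithDeriv σ g a b) (h₂ : IsACWithDeriv σ g b c)
    (hab : a ≤ b) (hbc : b ≤ c) : IsACWithDeriv σ g a c := by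
  refine ⟨h₁.1.trans h₂.1, fun t ht => ?_⟩
  rcases le_total t b with htb | htb
  · exact h₁.2 t ⟨ht.1, htb⟩
  · rw [h₂.2 t ⟨htb, ht.2⟩, h₁.2 b (right_mem_Icc.2 hab), add_assoc,
      intervalIntegral.integral_add_adjacent_intervals h₁.1
        (h₂.intervalIntegrable_of_mem hbc (left_mem_Icc.2 hbc) ⟨htb, ht.2⟩)]

theorem IsACWithDeriv.comp_sub_right (h : IsACWithDeriv σ g a b) (c : ℝ) :
    IsACWithDeriv (fun t => σ (t - c)) (fun t => g (t - c)) (a + c) (b + c) := by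
  refine ⟨h.1.comp_sub_right c, fun t ht => ?_⟩
  have ht' : t - c ∈ Icc a b := ⟨by linarith [ht.1], by linarith [ht.2]⟩
  simp only [h.2 _ ht', add_sub_cancel_right, intervalIntegral.integral_comp_sub_right]

theorem IsACWithDeriv.comp_neg (h : IsACWithDeriv σ g a b) :
    IsACWithDeriv (fun t => σ (-t)) (fun t => -g (-t)) (-b) (-a) := by
  refine ⟨?_, fun t ht => ?_⟩
  · simpa [Function.comp_def, Pi.neg_def] using (h.1.comp_sub_left 0).neg.symm
  · have hta : a ≤ -t := by linarith [ht.2]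
    have htb : -t ≤ b := by linarith [ht.1]
    have hσ := (h.restrict hta htb le_rfl).2 b (right_mem_Icc.2 htb)
    simp only [neg_neg, intervalIntegral.integral_neg, intervalIntegral.integral_comp_neg, hσ]
    abel

/-- `σ : [a, b] → D` is an absolutely continuous curve in `D` with a.e. derivative `g`: a
competitor in the definition of `kobDist D`. -/
structure IsCurveIn (D : Set E) (σ g : ℝ → E) (a b : ℝ) : Prop where
  le : a ≤ b
  ac : IsACWithDeriv σ g a b
  mapsTo : MapsTo σ (Icc a b) D

/-- The Kobayashi length in `D` of the curve `σ` on `[a, b]` with a.e. derivative `g`. -/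
noncomputable def kobLength (D : Set E) (σ g : ℝ → E) (a b : ℝ) : ℝ :=
  ∫ t in a..b, kobMetric D (σ t) (g t)

theorem kobLength_nonneg (hab : a ≤ b) : 0 ≤ kobLength D σ g a b :=
  intervalIntegral.integral_nonneg hab fun _ _ => kobMetric_nonneg _ _ _

theorem kobLength_congr (hab : a ≤ b) (hσ : EqOn σ τ (Icc a b)) (hg : EqOn g k (Ioc a b)) :
    kobLength D σ g a b = kobLength D τ k a b := by
  refine intervalIntegral.integral_congr_ae (.of_forall fun t ht => ?_)
  rw [uIoc_of_le hab] at ht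
  rw [hσ (Ioc_subset_Icc_self ht), hg ht]

namespace IsCurveIn

theorem continuousOn (h : IsCurveIn D σ g a b) : ContinuousOn σ (Icc a b) :=
  h.ac.continuousOn h.le

theorem congr (h : IsCurveIn D σ g a b) (hσ : EqOn σ τ (Icc a b)) (hg : EqOn g k (Ioc a b)) :
    IsCurveIn D τ k a b :=
  ⟨h.le, h.ac.congr h.le hσ hg, h.mapsTo.congr hσ⟩

theorem restrict (h : IsCurveIn D σ g a b) (hac : a ≤ c) (hcd : c ≤ d) (hdb : d ≤ b) :
    IsCurveIn D σ g c d :=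
  ⟨hcd, h.ac.restrict hac hcd hdb, h.mapsTo.mono_left (Icc_subset_Icc hac hdb)⟩

theorem mono_set (h : IsCurveIn D σ g a b) (hDD' : D ⊆ D') : IsCurveIn D' σ g a b :=
  ⟨h.le, h.ac, h.mapsTo.mono_right hDD'⟩

theorem append (h₁ : IsCurveIn D σ g a b) (h₂ : IsCurveIn D σ g b c) : IsCurveIn D σ g a c :=
  ⟨h₁.le.trans h₂.le, h₁.ac.append h₂.ac h₁.le h₂.le,
    Icc_union_Icc_eq_Icc h₁.le h₂.le ▸ h₁.mapsTo.union h₂.mapsTo⟩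

theorem comp_neg (h : IsCurveIn D σ g a b) :
    IsCurveIn D (fun t => σ (-t)) (fun t => -g (-t)) (-b) (-a) :=
  ⟨neg_le_neg h.le, h.ac.comp_neg, fun _ ht => h.mapsTo ⟨le_neg.1 ht.2, neg_le.1 ht.1⟩⟩

theorem kobLength_comp_neg (h : IsCurveIn D σ g a b) (hD : IsOpen D) :
    kobLength D (fun t => σ (-t)) (fun t => -g (-t)) (-b) (-a) = kobLength D σ g a b := by
  calc kobLength D (fun t => σ (-t)) (fun t => -g (-t)) (-b) (-a)
      = ∫ t in -b..-a, kobMetric D (σ (-t)) (g (-t)) := by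
        refine intervalIntegral.integral_congr fun t ht =>
          kobMetric_neg hD (h.comp_neg.mapsTo ?_) _
        rwa [uIcc_of_le h.comp_neg.le] at ht
    _ = kobLength D σ g a b := by
        rw [intervalIntegral.integral_comp_neg fun t => kobMetric D (σ t) (g t), neg_neg, neg_neg,
          kobLength]

theorem kobDist_le_kobLength (h : IsCurveIn D σ g a b) :
    kobDist D (σ a) (σ b) ≤ kobLength D σ g a b := by
  refine csInf_le ⟨0, ?_⟩ ⟨a, b, σ, g, h.le, h.ac, h.mapsTo, rfl, rfl, rfl⟩
  rintro _ ⟨a', b', σ', g', hab, -, -, -, -, rfl⟩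
  exact kobLength_nonneg hab

theorem intervalIntegrable_kobMetric [SecondCountableTopology E] (h : IsCurveIn D σ g a b)
    (hD : IsOpen D) : IntervalIntegrable (fun t => kobMetric D (σ t) (g t)) volume a b := by
  borelize E
  rw [intervalIntegrable_iff_integrableOn_Icc_of_le h.le]
  have hg : IntegrableOn g (Icc a b) :=
    (intervalIntegrable_iff_integrableOn_Icc_of_le h.le).1 h.ac.1
  have hmeas : AEStronglyMeasurable (fun t => kobMetric D (σ t) (g t))
      (volume.restrict (Icc a b)) := by
    have hσ := (h.continuousOn.aestronglyMeasurable (μ := volume) measurableSet_Icc).aemeasurable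
    have hpair := hσ.prodMk hg.aestronglyMeasurable.aemeasurable
    refine (((measurable_indicator_kobMetric hD).comp_aemeasurable hpair).congr
      ?_).aestronglyMeasurable
    filter_upwards [ae_restrict_mem measurableSet_Icc] with t ht
    exact indicator_of_mem (mk_mem_prod (h.mapsTo ht) (mem_univ (g t))) _
  obtain ⟨ε, hε, hεD⟩ := (isCompact_Icc.image_of_continuousOn h.continuousOn)
    |>.exists_thickening_subset_open hD h.mapsTo.image_subset
  refine Integrable.mono' (hg.norm.div_const ε) hmeas ?_
  filter_upwards [ae_restrict_mem measurableSet_Icc] with t ht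
  rw [Real.norm_of_nonneg (kobMetric_nonneg _ _ _)]
  exact kobMetric_le_div hε ((ball_subset_thickening (mem_image_of_mem σ ht) ε).trans hεD) (g t)

theorem kobLength_append [SecondCountableTopology E] (h₁ : IsCurveIn D σ g a b)
    (h₂ : IsCurveIn D σ g b c) (hD : IsOpen D) :
    kobLength D σ g a c = kobLength D σ g a b + kobLength D σ g b c :=
  (intervalIntegral.integral_add_adjacent_intervals (h₁.intervalIntegrable_kobMetric hD)
    (h₂.intervalIntegrable_kobMetric hD)).symm

theorem kobLength_mono_set [SecondCountableTopology E] (h : IsCurveIn D σ g a b)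
    (hD : IsOpen D) (hDD' : D ⊆ D') : kobLength D' σ g a b ≤ kobLength D σ g a b := by
  rw [kobLength, kobLength, intervalIntegral.integral_of_le h.le,
    intervalIntegral.integral_of_le h.le]
  refine integral_mono_of_nonneg (.of_forall fun _ => kobMetric_nonneg _ _ _)
    (h.intervalIntegrable_kobMetric hD).1 ?_
  filter_upwards [ae_restrict_mem measurableSet_Ioc] with t ht
  exact kobMetric_mono hD hDD' (h.mapsTo (Ioc_subset_Icc_self ht)) _

end IsCurveIn

/-- `x` and `y` can be joined in `D` by a curve of Kobayashi length at most `r`. Unlike an upper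
bound on `kobDist D x y` (an infimum, which is `0` when there is no competitor), this implies that
such a curve exists. -/
def JoinedWithin (D : Set E) (r : ℝ) (x y : E) : Prop :=
  ∃ (a b : ℝ) (σ g : ℝ → E),
    IsCurveIn D σ g a b ∧ σ a = x ∧ σ b = y ∧ kobLength D σ g a b ≤ r

namespace JoinedWithin

theorem kobDist_le (h : JoinedWithin D r x y) : kobDist D x y ≤ r := by
  obtain ⟨a, b, σ, g, hσ, rfl, rfl, hr⟩ := h
  exact hσ.kobDist_le_kobLength.trans hr

theorem mono (h : JoinedWithin D r x y) (hrs : r ≤ s) : JoinedWithin D s x y := by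
  obtain ⟨a, b, σ, g, hσ, hx, hy, hr⟩ := h
  exact ⟨a, b, σ, g, hσ, hx, hy, hr.trans hrs⟩

theorem mono_set [SecondCountableTopology E] (h : JoinedWithin D r x y) (hD : IsOpen D)
    (hDD' : D ⊆ D') : JoinedWithin D' r x y := by
  obtain ⟨a, b, σ, g, hσ, hx, hy, hr⟩ := h
  exact ⟨a, b, σ, g, hσ.mono_set hDD', hx, hy, (hσ.kobLength_mono_set hD hDD').trans hr⟩

theorem exists_kobLength_lt (h : JoinedWithin D r x y) (hs : kobDist D x y < s) :
    ∃ (a b : ℝ) (σ g : ℝ → E),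
      IsCurveIn D σ g a b ∧ σ a = x ∧ σ b = y ∧ kobLength D σ g a b < s := by
  obtain ⟨a, b, σ, g, hσ, hx, hy, -⟩ := h
  obtain ⟨_, ⟨a, b, σ, g, hab, hac, hm, hx, hy, rfl⟩, hlt⟩ :=
    exists_lt_of_csInf_lt (by exact ⟨_, a, b, σ, g, hσ.le, hσ.ac, hσ.mapsTo, hx, hy, rfl⟩) hs
  exact ⟨a, b, σ, g, ⟨hab, hac, hm⟩, hx, hy, hlt⟩

protected theorem symm (h : JoinedWithin D r x y) (hD : IsOpen D) : JoinedWithin D r y x := by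
  obtain ⟨a, b, σ, g, hσ, hx, hy, hr⟩ := h
  exact ⟨-b, -a, _, _, hσ.comp_neg, by simpa, by simpa, (hσ.kobLength_comp_neg hD).trans_le hr⟩

theorem exists_left_eq (h : JoinedWithin D r x y) (b : ℝ) :
    ∃ (c : ℝ) (σ g : ℝ → E),
      IsCurveIn D σ g b c ∧ σ b = x ∧ σ c = y ∧ kobLength D σ g b c ≤ r := by
  obtain ⟨a, c, σ, g, hσ, hx, hy, hr⟩ := h
  have hab : a + (b - a) = b := by ring
  refine ⟨c + (b - a), fun t => σ (t - (b - a)), fun t => g (t - (b - a)),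
    ⟨by linarith [hσ.le], by simpa only [hab] using hσ.ac.comp_sub_right (b - a),
      fun t ht => hσ.mapsTo ?_⟩,
    by simpa, by simpa, ?_⟩
  · exact ⟨by linarith [ht.1], by linarith [ht.2]⟩
  · rw [kobLength,
      intervalIntegral.integral_comp_sub_right fun t => kobMetric D (σ t) (g t)]
    simpa [kobLength] using hr

protected theorem trans [SecondCountableTopology E] (h₁ : JoinedWithin D r x y)
    (h₂ : JoinedWithin D s y z) (hD : IsOpen D) : JoinedWithin D (r + s) x z := by
  obtain ⟨a, b, σ, g, hσ, hσx, hσy, hr⟩ := h₁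
  obtain ⟨c, τ, k, hτ, hτy, hτz, hs⟩ := h₂.exists_left_eq b
  classical
  have hσ' : EqOn σ ((Iic b).piecewise σ τ) (Icc a b) := fun t ht =>
    (piecewise_eq_of_mem (Iic b) _ _ (mem_Iic.2 ht.2)).symm
  have hg' : EqOn g ((Iic b).piecewise g k) (Ioc a b) := fun t ht =>
    (piecewise_eq_of_mem (Iic b) _ _ (mem_Iic.2 ht.2)).symm
  have hτ' : EqOn τ ((Iic b).piecewise σ τ) (Icc b c) := fun t ht => by
    rcases ht.1.eq_or_lt with rfl | hbt
    · rw [piecewise_eq_of_mem (Iic b) _ _ self_mem_Iic, hτy, hσy]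
    · exact (piecewise_eq_of_notMem (Iic b) _ _ hbt.not_ge).symm
  have hk' : EqOn k ((Iic b).piecewise g k) (Ioc b c) := fun t ht =>
    (piecewise_eq_of_notMem (Iic b) _ _ ht.1.not_ge).symm
  have h₁ := hσ.congr hσ' hg'
  have h₂ := hτ.congr hτ' hk'
  refine ⟨a, c, _, _, h₁.append h₂, ?_, ?_, ?_⟩
  · rw [← hσ' (left_mem_Icc.2 hσ.le), hσx]
  · rw [← hτ' (right_mem_Icc.2 hτ.le), hτz]
  · rw [h₁.kobLength_append h₂ hD, ← kobLength_congr hσ.le hσ' hg',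
      ← kobLength_congr hτ.le hτ' hk']
    exact add_le_add hr hs

protected theorem refl (hx : x ∈ D) : JoinedWithin D 0 x x :=
  ⟨0, 0, fun _ => x, 0, ⟨le_rfl, ⟨.refl, by simp⟩, fun _ _ => hx⟩, rfl, rfl, by simp [kobLength]⟩

theorem of_segment [CompleteSpace E] [SecondCountableTopology E] (hD : IsOpen D) {w : E} {T : ℝ}
    (hT : 0 ≤ T) {φ : ℝ → ℝ} (hφc : ContinuousOn φ (Icc 0 T)) (hφ : ∀ t ∈ Icc 0 T, 0 < φ t)
    (hb : ∀ t ∈ Icc 0 T, ball (x + t • w) (φ t) ⊆ D) :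
    JoinedWithin D (∫ t in 0..T, ‖w‖ / φ t) x (x + T • w) := by
  have hcurve : IsCurveIn D (fun t : ℝ => x + t • w) (fun _ => w) 0 T :=
    ⟨hT, ⟨intervalIntegrable_const, fun t _ => by simp⟩,
      fun t ht => hb t ht (mem_ball_self (hφ t ht))⟩
  refine ⟨0, T, _, _, hcurve, by simp, rfl, ?_⟩
  refine intervalIntegral.integral_mono_on hT (hcurve.intervalIntegrable_kobMetric hD) ?_
    fun t ht => kobMetric_le_div (hφ t ht) (hb t ht) w
  refine ContinuousOn.intervalIntegrable ?_
  rw [uIcc_of_le hT]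
  exact continuousOn_const.div hφc fun t ht => (hφ t ht).ne'

end JoinedWithin

theorem kobDist_anti_set [SecondCountableTopology E] (hD : IsOpen D) (hDD' : D ⊆ D')
    (h : JoinedWithin D r x y) : kobDist D' x y ≤ kobDist D x y := by
  refine le_of_forall_pos_le_add fun ε hε => ?_
  obtain ⟨a, b, σ, g, hσ, rfl, rfl, hlt⟩ := h.exists_kobLength_lt (lt_add_of_pos_right _ hε)
  exact (hσ.mono_set hDD').kobDist_le_kobLength.trans
    ((hσ.kobLength_mono_set hD hDD').trans hlt.le)

end KobayashiLength

section LogarithmBranches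

variable {A : Type*} [TopologicalSpace A]

theorem eqOn_of_exp_eqOn {s : Set A} (hs : IsPreconnected s) {f g : A → ℂ}
    (hf : ContinuousOn f s) (hg : ContinuousOn g s)
    (h : EqOn (fun a => Complex.exp (f a)) (fun a => Complex.exp (g a)) s) {a : A} (ha : a ∈ s)
    (hfg : f a = g a) : EqOn f g s :=
  Complex.isCoveringMap_exp.eqOn_of_comp_eqOn hs hf hg (fun _ hx => Subtype.ext (h hx)) ha hfg

theorem not_exists_log_inv_on_sphere {R : ℝ} (hR : 0 < R) :
    ¬∃ l : ℂ → ℂ, ContinuousOn l (sphere 0 R) ∧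
      ∀ c ∈ sphere (0 : ℂ) R, Complex.exp (l c) = c⁻¹ := by
  rintro ⟨l, hl, hexp⟩
  set p : ℝ → ℂ := fun θ => R * Complex.exp (θ * Complex.I) with hp
  have hpR : ∀ θ, p θ ∈ sphere (0 : ℂ) R := fun θ => by
    simp [hp, Complex.norm_exp_ofReal_mul_I, abs_of_pos hR]
  have hlift : EqOn (fun θ => l (p θ)) (fun θ : ℝ => l (p 0) - θ * Complex.I) univ := by
    refine eqOn_of_exp_eqOn isPreconnected_univ
      (hl.comp_continuous (by fun_prop) hpR).continuousOn (by fun_prop) (fun θ _ => ?_)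
      (mem_univ 0) (by simp)
    change Complex.exp (l (p θ)) = Complex.exp (l (p 0) - θ * Complex.I)
    rw [Complex.exp_sub, hexp _ (hpR θ), hexp _ (hpR 0)]
    simp only [hp, Complex.ofReal_zero, zero_mul, Complex.exp_zero, mul_one, mul_inv,
      div_eq_mul_inv]
  have hloop : p (2 * Real.pi) = p 0 := by simp [hp, Complex.exp_two_pi_mul_I]
  have h2π := hlift (mem_univ (2 * Real.pi))
  simp only [hloop] at h2π
  have hzero : ((2 * Real.pi : ℝ) : ℂ) * Complex.I = 0 := by linear_combination h2π
  simp [Real.pi_ne_zero] at hzero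

theorem exists_continuousOn_log_eq {T : Set ℂ} (hT : IsOpen T) (hsc : IsSimplyConnected T)
    (h0 : (0 : ℂ) ∉ T) {t₀ : ℂ} (ht₀ : t₀ ∈ T) :
    ∃ f : ℂ → ℂ, ContinuousOn f T ∧ (∀ t ∈ T, Complex.exp (f t) = t) ∧
      f t₀ = Complex.log t₀ := by
  obtain ⟨f, hf, hexp⟩ := Complex.exists_continuousOn_eqOn_exp_comp hsc hT
    (g := fun t => t) continuousOn_id (by rintro ⟨t, ht, rfl⟩; exact h0 ht)
  have hne : t₀ ≠ 0 := ne_of_mem_of_not_mem ht₀ h0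
  have hexp' : ∀ t ∈ T, Complex.exp (f t) = t := fun t ht => hexp ht
  refine ⟨fun t => f t - (f t₀ - Complex.log t₀), hf.sub continuousOn_const, fun t ht => ?_,
    by ring⟩
  rw [Complex.exp_sub, Complex.exp_sub, hexp' t ht, hexp' t₀ ht₀, Complex.exp_log hne,
    div_self hne, div_one]

theorem exists_isCompact_isPreconnected_mem_nhds {T : Set ℂ} (hT : IsOpen T)
    (hpc : IsPathConnected T) {a b : ℂ} (ha : a ∈ T) (hb : b ∈ T) :
    ∃ K ⊆ T, IsCompact K ∧ IsPreconnected K ∧ a ∈ K ∧ K ∈ 𝓝 b := by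
  obtain ⟨γ, hγ⟩ := hpc.joinedIn a ha b hb
  obtain ⟨η, hη, hηT⟩ := nhds_basis_closedBall.mem_iff.1 (hT.mem_nhds hb)
  refine ⟨range γ ∪ closedBall b η, union_subset (range_subset_iff.2 hγ) hηT,
    (isCompact_range γ.continuous).union (isCompact_closedBall b η), ?_, Or.inl ⟨0, γ.source⟩,
    mem_of_superset (closedBall_mem_nhds b hη) subset_union_right⟩
  exact (isPreconnected_range γ.continuous).union b ⟨1, γ.target⟩ (mem_closedBall_self hη.le)
    (convex_closedBall b η).isPreconnected

/- The branches of the logarithm on the fibres are normalised at the common point `t₀`; on a compact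
connected set joining `t₀` to a neighbourhood of `h c₀`, neighbouring branches then agree. -/
theorem exists_continuousOn_log_of_fibers {O : Set (A × ℂ)} (hO : IsOpen O) {S : Set A}
    (hsc : ∀ c ∈ S, IsSimplyConnected {t | (c, t) ∈ O}) (h0 : ∀ c ∈ S, (c, 0) ∉ O) {t₀ : ℂ}
    (ht₀ : ∀ c ∈ S, (c, t₀) ∈ O) {h : A → ℂ} (hc : ContinuousOn h S)
    (hO' : ∀ c ∈ S, (c, h c) ∈ O) :
    ∃ l : A → ℂ, ContinuousOn l S ∧ ∀ c ∈ S, Complex.exp (l c) = h c := by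
  have hfib : ∀ c, IsOpen {t : ℂ | (c, t) ∈ O} := fun c => hO.preimage (by fun_prop)
  choose! f hf hexp hft₀ using fun c (hcS : c ∈ S) =>
    exists_continuousOn_log_eq (hfib c) (hsc c hcS) (h0 c hcS) (ht₀ c hcS)
  refine ⟨fun c => f c (h c), fun c₀ hc₀ => ?_, fun c hcS => hexp c hcS _ (hO' c hcS)⟩
  obtain ⟨K, hKO, hK, hKpre, ht₀K, hKh⟩ := exists_isCompact_isPreconnected_mem_nhds (hfib c₀)
    (hsc c₀ hc₀).isPathConnected (ht₀ c₀ hc₀) (hO' c₀ hc₀)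
  have htube : ∀ᶠ c in 𝓝 c₀, ∀ t ∈ K, (c, t) ∈ O :=
    hK.eventually_forall_of_forall_eventually fun t ht => hO.mem_nhds (hKO ht)
  have hagree : (fun c => f c (h c)) =ᶠ[𝓝[S] c₀] fun c => f c₀ (h c) := by
    filter_upwards [nhdsWithin_le_nhds htube, (hc c₀ hc₀).eventually_mem hKh,
      self_mem_nhdsWithin] with c hcK hcb hcS
    refine eqOn_of_exp_eqOn hKpre ((hf c hcS).mono hcK) ((hf c₀ hc₀).mono hKO) (fun t ht => ?_)
      ht₀K ((hft₀ c hcS).trans (hft₀ c₀ hc₀).symm) hcb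
    exact (hexp c hcS t (hcK t ht)).trans (hexp c₀ hc₀ t (hKO ht)).symm
  refine ContinuousWithinAt.congr_of_eventuallyEq ?_ hagree rfl
  exact ((hf c₀ hc₀).continuousAt ((hfib c₀).mem_nhds (hO' c₀ hc₀))).comp_continuousWithinAt
    (hc c₀ hc₀)

end LogarithmBranches

section CConvexSlices

variable {E : Type*} [NormedAddCommGroup E] [NormedSpace ℂ E] {D : Set E}

theorem CConvex.isSimplyConnected_slice (hC : CConvex D) {z v : E} (hv : v ≠ 0) {t : ℂ}
    (ht : z + t • v ∈ D) : IsSimplyConnected {t : ℂ | z + t • v ∈ D} := by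
  have himage : (fun t : ℂ => z + t • v) '' {t : ℂ | z + t • v ∈ D} =
      D ∩ {w | ∃ c : ℂ, w = z + c • v} := by
    ext w
    constructor
    · rintro ⟨t, ht, rfl⟩
      exact ⟨ht, t, rfl⟩
    · rintro ⟨hw, t, rfl⟩
      exact ⟨t, hw, rfl⟩
  have hemb : IsEmbedding fun t : ℂ => z + t • v :=
    (Homeomorph.addLeft z).isEmbedding.comp (isClosedEmbedding_smul_left hv).isEmbedding
  have hsc := (hC z v hv ⟨_, ht, t, rfl⟩).2
  rw [← himage] at hsc
  exact (hemb.homeomorphImage {t : ℂ | z + t • v ∈ D}).toHomotopyEquiv.simplyConnectedSpace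

/- Otherwise `c ↦ c⁻¹`, a section of the slices `{t | ξ + t • (c • w - n) ∈ D}`, would have a
continuous logarithm along a large circle. -/
theorem CConvex.exists_radius_forall_notMem (hC : CConvex D) (hD : IsOpen D) {ξ w : E}
    (hξ : ξ ∉ D) (hw : ξ + w ∈ D) (n : E) :
    ∃ R : ℝ, 0 < R ∧ ∀ t : ℂ, ∃ c : ℂ, ‖c‖ = R ∧ ξ + t • (c • w - n) ∉ D := by
  obtain ⟨ε, hε, hb⟩ := Metric.isOpen_iff.1 hD _ hw
  obtain ⟨R, hRn⟩ := exists_gt (‖n‖ / ε)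
  have hR : 0 < R := (by positivity : 0 ≤ ‖n‖ / ε).trans_lt hRn
  refine ⟨R, hR, fun t₀ => ?_⟩
  by_contra! ht₀
  have hne : ∀ c ∈ sphere (0 : ℂ) R, c • w - n ≠ 0 := fun c hc h =>
    hξ (by simpa [h] using ht₀ c (mem_sphere_zero_iff_norm.1 hc))
  have hmem : ∀ c ∈ sphere (0 : ℂ) R, ξ + t₀ • (c • w - n) ∈ D := fun c hc =>
    ht₀ c (mem_sphere_zero_iff_norm.1 hc)
  have hsection : ∀ c ∈ sphere (0 : ℂ) R, ξ + c⁻¹ • (c • w - n) ∈ D := fun c hc => by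
    refine hb ?_
    have hdist : ξ + c⁻¹ • (c • w - n) - (ξ + w) = -(c⁻¹ • n) := by
      rw [smul_sub, inv_smul_smul₀ (ne_zero_of_mem_sphere hR.ne' ⟨c, hc⟩)]
      abel
    rw [mem_ball, dist_eq_norm, hdist, norm_neg, norm_smul, norm_inv,
      mem_sphere_zero_iff_norm.1 hc, ← div_eq_inv_mul, div_lt_comm₀ hR hε]
    exact hRn
  exact not_exists_log_inv_on_sphere hR <| exists_continuousOn_log_of_fibers
    (hD.preimage (by fun_prop : Continuous fun p : ℂ × ℂ => ξ + p.2 • (p.1 • w - n)))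
    (fun c hc => hC.isSimplyConnected_slice (hne c hc) (hmem c hc)) (fun c _ => by simpa using hξ)
    hmem (continuousOn_id.inv₀ fun c hc => ne_zero_of_mem_sphere hR.ne' ⟨c, hc⟩) hsection

end CConvexSlices

section BoundaryDistance

variable {E : Type*} [NormedAddCommGroup E] {D : Set E} {x y : E} {s : ℝ}

theorem bdist_nonneg (D : Set E) (x : E) : 0 ≤ bdist D x :=
  infDist_nonneg

theorem notMem_of_mem_frontier (hD : IsOpen D) (hx : x ∈ frontier D) : x ∉ D :=
  (disjoint_frontier_iff_isOpen.2 hD).notMem_of_mem_left hx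

theorem subset_of_disjoint_frontier {t : Set E} (hD : IsOpen D) (ht : IsPreconnected t)
    (hne : (t ∩ D).Nonempty) (hdisj : Disjoint t (frontier D)) : t ⊆ D := by
  refine ht.subset_left_of_subset_union hD isClosed_closure.isOpen_compl
    (disjoint_compl_right.mono_left subset_closure) (fun x hx => ?_) hne
  by_cases hxD : x ∈ closure D
  · rw [closure_eq_self_union_frontier] at hxD
    exact Or.inl (hxD.resolve_right (hdisj.notMem_of_mem_left hx))
  · exact Or.inr hxD

theorem ball_bdist_subset [NormedSpace ℝ E] (hD : IsOpen D) (hx : x ∈ D) :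
    ball x (bdist D x) ⊆ D := by
  rcases (bdist_nonneg D x).eq_or_lt with h0 | h0
  · rw [← h0, ball_zero]
    exact empty_subset D
  · exact subset_of_disjoint_frontier hD (convex_ball x _).isPreconnected
      ⟨x, mem_ball_self h0, hx⟩ disjoint_ball_infDist

theorem bdist_pos (hD : IsOpen D) (hne : (frontier D).Nonempty) (hx : x ∈ D) : 0 < bdist D x :=
  (isClosed_frontier.notMem_iff_infDist_pos hne).1 fun h => notMem_of_mem_frontier hD h hx

theorem le_bdist_of_ball_subset (hD : IsOpen D) (hne : (frontier D).Nonempty)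
    (hb : ball x s ⊆ D) : s ≤ bdist D x := by
  refine (le_infDist hne).2 fun y hy => ?_
  by_contra! hlt
  exact notMem_of_mem_frontier hD hy (hb (by rwa [mem_ball, dist_comm]))

theorem bdist_le_norm_apply [NormedSpace ℂ E] (hD : IsOpen D) {n ξ : E} {L : E →L[ℂ] ℂ}
    (hn : ‖n‖ = 1) (hL : L n = 1) (hne : ∀ y ∈ D, L (y - ξ) ≠ 0) (hy : y ∈ D) :
    bdist D y ≤ ‖L (y - ξ)‖ := by
  by_contra! hlt
  refine hne (y - L (y - ξ) • n) (ball_bdist_subset hD hy ?_) ?_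
  · rwa [mem_ball, dist_eq_norm, sub_sub_cancel_left, norm_neg, norm_smul, hn, mul_one]
  · rw [sub_right_comm, map_sub, map_smul, hL, smul_eq_mul, mul_one, sub_self]

end BoundaryDistance

section SupportingCones

variable {E : Type*} [NormedAddCommGroup E] [NormedSpace ℂ E] {D W : Set E} {ρ : E → ℝ}
  {ξ ξ₀ n x y b : E} {G : E →L[ℝ] ℝ} {m r t s : ℝ}

/-- At the boundary point `ξ`, the complex hyperplane `{L (y - ξ) = 0}` avoids `D`, and moving from
a point of `D` near `ξ` in the direction `-n`, transverse to it, enlarges the inscribed ball at the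
rate `c`. The constants `r`, `c`, `M` are recorded so that they can be made uniform in `ξ`. -/
def HasSupportingCone (D : Set E) (r c M : ℝ) (ξ : E) : Prop :=
  ∃ (n : E) (L : E →L[ℂ] ℂ), ‖n‖ = 1 ∧ L n = 1 ∧ ‖L‖ ≤ M ∧ (∀ y ∈ D, L (y - ξ) ≠ 0) ∧
    ∀ y ∈ D, dist y ξ < r → ∀ t : ℝ, 0 ≤ t → t ≤ r →
      ball (y - t • n) (min (bdist D y) r + c * t) ⊆ D

theorem HasSupportingCone.mono {r c M r' c' M' : ℝ} (h : HasSupportingCone D r c M ξ)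
    (hr : r' ≤ r) (hc : c' ≤ c) (hM : M ≤ M') : HasSupportingCone D r' c' M' ξ := by
  obtain ⟨n, L, hn, hLn, hLM, hL, hcone⟩ := h
  refine ⟨n, L, hn, hLn, hLM.trans hM, hL, fun y hy hyξ t ht htr => ?_⟩
  refine (ball_subset_ball ?_).trans (hcone y hy (hyξ.trans_le hr) t ht (htr.trans hr))
  gcongr

theorem exists_norm_eq_one_apply_pos (hG : G ≠ 0) : ∃ n : E, ‖n‖ = 1 ∧ 0 < G n := by
  obtain ⟨v, hv⟩ : ∃ v, 0 < G v := by
    obtain ⟨v, hv⟩ := DFunLike.ne_iff.1 hG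
    rcases lt_or_gt_of_ne hv with h | h
    · exact ⟨-v, by simpa using h⟩
    · exact ⟨v, h⟩
  have hv₀ : v ≠ 0 := fun h => by simp [h] at hv
  refine ⟨‖v‖⁻¹ • v, norm_smul_inv_norm hv₀, ?_⟩
  rw [map_smul, smul_eq_mul]
  exact mul_pos (inv_pos.2 (norm_pos_iff.2 hv₀)) hv

namespace IsLocalDefiningFn

theorem differentiableAt (h : IsLocalDefiningFn D ξ₀ W ρ) (hx : x ∈ W) :
    DifferentiableAt ℝ ρ x :=
  (h.2.2.1.contDiffAt (h.1.mem_nhds hx)).differentiableAt one_ne_zero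

theorem mem_iff (h : IsLocalDefiningFn D ξ₀ W ρ) (hx : x ∈ W) : x ∈ D ↔ ρ x < 0 := by
  simpa [hx] using Set.ext_iff.1 h.2.2.2.2.1 x

theorem apply_eq_zero (h : IsLocalDefiningFn D ξ₀ W ρ) (hx : x ∈ W) (hxD : x ∈ frontier D) :
    ρ x = 0 := by
  simpa [hx, hxD] using Set.ext_iff.1 h.2.2.2.2.2 x

theorem exists_fderiv_near (h : IsLocalDefiningFn D ξ₀ W ρ) :
    ∃ (n : E) (m R : ℝ), ‖n‖ = 1 ∧ 0 < m ∧ fderiv ℝ ρ ξ₀ n = 4 * m ∧ 0 < R ∧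
      ∀ z ∈ ball ξ₀ R, z ∈ W ∧ ‖fderiv ℝ ρ z - fderiv ℝ ρ ξ₀‖ ≤ m := by
  obtain ⟨hW, hξW, hρ, hdρ, -⟩ := h
  obtain ⟨n, hn, hpos⟩ := exists_norm_eq_one_apply_pos (hdρ ξ₀ hξW)
  have hm : 0 < fderiv ℝ ρ ξ₀ n / 4 := by positivity
  have hcont := (hρ.continuousOn_fderiv_of_isOpen hW le_rfl).continuousAt (hW.mem_nhds hξW)
  obtain ⟨R, hR, hball⟩ := eventually_nhds_iff_ball.1
    ((hW.eventually_mem hξW).and (hcont.eventually (closedBall_mem_nhds _ hm)))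
  exact ⟨n, _, R, hn, hm, by ring, hR,
    fun z hz => ⟨(hball z hz).1, mem_closedBall_iff_norm.1 (hball z hz).2⟩⟩

theorem sub_smul_add_mem (h : IsLocalDefiningFn D ξ₀ W ρ) {R : ℝ}
    (hball : ∀ z ∈ ball ξ₀ R, z ∈ W ∧ ‖fderiv ℝ ρ z - G‖ ≤ m) (hn : ‖n‖ = 1) (hm : 0 < m)
    (hGn : G n = 4 * m) (hy : y ∈ D) (hyR : y ∈ ball ξ₀ R)
    (hbR : y - t • n + b ∈ ball ξ₀ R) (ht : 0 ≤ t) (hb : ‖b‖ ≤ t) (hGb : ‖G‖ * ‖b‖ ≤ m * t) :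
    y - t • n + b ∈ D := by
  rw [h.mem_iff (hball _ hbR).1]
  have hy0 : ρ y < 0 := (h.mem_iff (hball y hyR).1).1 hy
  have hmv : |ρ (y - t • n + b) - ρ y - G (y - t • n + b - y)| ≤ m * ‖y - t • n + b - y‖ :=
    Convex.norm_image_sub_le_of_norm_fderiv_le' (fun z hz => h.differentiableAt (hball z hz).1)
      (fun z hz => (hball z hz).2) (convex_ball ξ₀ R) hyR hbR
  have hstep : y - t • n + b - y = b - t • n := by abel
  have hnorm : ‖b - t • n‖ ≤ 2 * t := by
    refine (norm_sub_le _ _).trans ?_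
    rw [norm_smul, hn, Real.norm_of_nonneg ht]
    linarith
  rw [hstep, map_sub, map_smul, hGn, smul_eq_mul] at hmv
  have hGb' : G b ≤ m * t := ((le_abs_self _).trans (G.le_opNorm b)).trans hGb
  nlinarith [(abs_le.1 hmv).2, mul_nonneg hm.le ht]

theorem ball_sub_smul_subset (h : IsLocalDefiningFn D ξ₀ W ρ)
    (hball : ∀ z ∈ ball ξ₀ (5 * r), z ∈ W ∧ ‖fderiv ℝ ρ z - G‖ ≤ m) (hn : ‖n‖ = 1) (hm : 0 < m)
    (hGn : G n = 4 * m) (hyr : dist y ξ₀ < 2 * r) (ht : 0 ≤ t) (htr : t ≤ r) (hs : 0 < s)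
    (hsr : s ≤ r) (hsD : ball y s ⊆ D) :
    ball (y - t • n) (s + m / (‖G‖ + m) * t) ⊆ D := by
  have hB : 0 < ‖G‖ + m := by positivity
  have hle : m / (‖G‖ + m) ≤ 1 := (div_le_one hB).2 (by linarith [norm_nonneg G])
  intro z hz
  rw [mem_ball, add_comm] at hz
  obtain ⟨w, hzw, hw⟩ := exists_dist_lt_le hs (by positivity) hz
  rw [dist_eq_norm] at hzw hw
  have hb : ‖w - (y - t • n)‖ ≤ t := hw.trans (mul_le_of_le_one_left ht hle)
  have hz' : z = y + (z - w) - t • n + (w - (y - t • n)) := by abel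
  have hys : dist (y + (z - w)) y < s := by rwa [dist_eq_norm, add_sub_cancel_left]
  have hyr' : dist (y + (z - w)) ξ₀ < 3 * r := by linarith [dist_triangle (y + (z - w)) y ξ₀]
  have hzr : dist z (y + (z - w)) ≤ 2 * t := by
    have hsub : z - (y + (z - w)) = w - (y - t • n) - t • n := by abel
    rw [dist_eq_norm, hsub]
    refine (norm_sub_le _ _).trans ?_
    rw [norm_smul, hn, Real.norm_of_nonneg ht]
    linarith
  rw [hz']
  refine h.sub_smul_add_mem hball hn hm hGn (hsD hys) (mem_ball.2 (by linarith)) ?_ ht hb ?_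
  · rw [← hz', mem_ball]
    linarith [dist_triangle z (y + (z - w)) ξ₀]
  · calc ‖G‖ * ‖w - (y - t • n)‖ ≤ (‖G‖ + m) * (m / (‖G‖ + m) * t) := by
          gcongr
          linarith
      _ = m * t := by field_simp

end IsLocalDefiningFn

theorem exists_pos_forall_apply_add_smul_lt {f : E → ℝ} (hf : HasFDerivAt f G x) (hW : W ∈ 𝓝 x)
    (hm : 0 < m) (Q : ℝ) :
    ∃ t : ℝ, 0 < t ∧ ∀ d : E, ‖d‖ ≤ Q → G d ≤ -m → x + t • d ∈ W ∧ f (x + t • d) < f x := by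
  obtain ⟨q, hQq, hq⟩ : ∃ q, Q < q ∧ 0 < q := ((eventually_gt_atTop Q).and
    (eventually_gt_atTop 0)).exists
  have hlittle := hf.isLittleO.def (c := m / (2 * q)) (by positivity)
  obtain ⟨s, hs, hball⟩ := eventually_nhds_iff_ball.1 (hlittle.and hW)
  refine ⟨s / q, by positivity, fun d hd hGd => ?_⟩
  have ht : 0 < s / q := by positivity
  have hnorm : ‖(s / q) • d‖ = s / q * ‖d‖ := by rw [norm_smul, Real.norm_of_nonneg ht.le]
  have hmem : x + (s / q) • d ∈ ball x s := by
    rw [mem_ball, dist_eq_norm, add_sub_cancel_left, hnorm, div_mul_eq_mul_div, div_lt_iff₀ hq]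
    exact mul_lt_mul_of_pos_left (hd.trans_lt hQq) hs
  obtain ⟨hest, hxW⟩ := hball _ hmem
  refine ⟨hxW, ?_⟩
  rw [add_sub_cancel_left, map_smul, smul_eq_mul, hnorm] at hest
  have herr : m / (2 * q) * (s / q * ‖d‖) ≤ s / q * (m / 2) := by
    calc m / (2 * q) * (s / q * ‖d‖) ≤ m / (2 * q) * (s / q * q) := by
          gcongr
          exact hd.trans hQq.le
      _ = s / q * (m / 2) := by field_simp
  have hlin : s / q * G d ≤ s / q * -m := by gcongr
  nlinarith [(abs_le.1 hest).2, mul_pos ht hm]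

theorem CConvex.extendRCLike_ne_zero (hC : CConvex D) (hD : IsOpen D) (hW : W ∈ 𝓝 ξ)
    (hρW : ∀ x ∈ W, ρ x < 0 → x ∈ D) (hξ : ξ ∉ D) (hρ : ρ ξ = 0) (hG : HasFDerivAt ρ G ξ)
    (hn : 0 < G n) (hy : y ∈ D) : (StrongDual.extendRCLike G : E →L[ℂ] ℂ) (y - ξ) ≠ 0 := by
  intro hL
  obtain ⟨R, -, hout⟩ := hC.exists_radius_forall_notMem hD hξ (w := y - ξ) (by simpa using hy) n
  obtain ⟨t, -, hin⟩ := exists_pos_forall_apply_add_smul_lt hG hW hn (R * ‖y - ξ‖ + ‖n‖)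
  obtain ⟨c, hc, hcD⟩ := hout t
  have hGc : G (c • (y - ξ) - n) = -G n := by
    have hre : ∀ x, ((StrongDual.extendRCLike G : E →L[ℂ] ℂ) x).re = G x :=
      fun x => StrongDual.re_extendRCLike_apply (𝕜 := ℂ) G x
    rw [map_sub, ← hre (c • _), map_smul, hL, smul_zero, Complex.zero_re, zero_sub]
  have hnorm : ‖c • (y - ξ) - n‖ ≤ R * ‖y - ξ‖ + ‖n‖ :=
    (norm_sub_le _ _).trans_eq (by rw [norm_smul, hc])
  obtain ⟨hxW, hneg⟩ := hin _ hnorm hGc.le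
  exact hcD (by simpa using hρW _ hxW (hρ ▸ hneg))

theorem CConvex.exists_hasSupportingCone_near (hC : CConvex D) (hD : IsOpen D)
    (h : IsLocalDefiningFn D ξ₀ W ρ) :
    ∃ r c M : ℝ, 0 < r ∧ 0 < c ∧
      ∀ ξ ∈ frontier D, dist ξ ξ₀ < r → HasSupportingCone D r c M ξ := by
  obtain ⟨n, m, R, hn, hm, hFn, hR, hball⟩ := h.exists_fderiv_near
  obtain ⟨r, rfl⟩ : ∃ r, R = 5 * r := ⟨R / 5, by ring⟩
  have hr : 0 < r := by linarith
  set F := fderiv ℝ ρ ξ₀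
  refine ⟨r, m / (‖F‖ + m), (‖F‖ + m) / (3 * m), hr, by positivity, fun ξ hξ hξr => ?_⟩
  have hξR : ξ ∈ ball ξ₀ (5 * r) := mem_ball.2 (by linarith)
  obtain ⟨hξW, hGF⟩ := hball ξ hξR
  set G := fderiv ℝ ρ ξ
  have hGn : 3 * m ≤ G n := by
    have hsub := (G - F).le_of_opNorm_le hGF n
    rw [hn, mul_one] at hsub
    have hsub' : |G n - F n| ≤ m := hsub
    linarith [(abs_le.1 hsub').1]
  set L : E →L[ℂ] ℂ := StrongDual.extendRCLike G
  have hLnorm : ‖L‖ ≤ ‖F‖ + m := by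
    rw [StrongDual.norm_extendRCLike]
    linarith [norm_le_norm_add_norm_sub' G F]
  have hLn : 3 * m ≤ ‖L n‖ :=
    hGn.trans ((StrongDual.re_extendRCLike_apply G n).ge.trans (RCLike.re_le_norm (L n)))
  have hLn0 : L n ≠ 0 := norm_pos_iff.1 (by linarith)
  have hne : ∀ y ∈ D, L (y - ξ) ≠ 0 := fun y hy =>
    hC.extendRCLike_ne_zero hD (h.1.mem_nhds hξW) (fun x hx => (h.mem_iff hx).2)
      (notMem_of_mem_frontier hD hξ) (h.apply_eq_zero hξW hξ)
      (h.differentiableAt hξW).hasFDerivAt (by linarith) hy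
  refine ⟨n, (L n)⁻¹ • L, hn, by simp [hLn0], ?_, fun y hy => ?_, fun y hy hyξ t ht htr => ?_⟩
  · rw [norm_smul, norm_inv, inv_mul_eq_div]
    gcongr
  · simpa [hLn0] using hne y hy
  · exact h.ball_sub_smul_subset hball hn hm hFn (by linarith [dist_triangle y ξ ξ₀]) ht htr
      (lt_min (bdist_pos hD ⟨ξ, hξ⟩ hy) hr) (min_le_right _ _)
      ((ball_subset_ball (min_le_left _ _)).trans (ball_bdist_subset hD hy))

theorem exists_hasSupportingCone_of_near (hK : IsCompact (frontier D))
    (h : ∀ ξ₀ ∈ frontier D, ∃ r c M : ℝ, 0 < r ∧ 0 < c ∧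
      ∀ ξ ∈ frontier D, dist ξ ξ₀ < r → HasSupportingCone D r c M ξ) :
    ∃ r c M : ℝ, 0 < r ∧ 0 < c ∧ ∀ ξ ∈ frontier D, HasSupportingCone D r c M ξ := by
  have hind : ∃ r c M : ℝ, 0 < r ∧ 0 < c ∧
      ∀ ξ ∈ frontier D, ξ ∈ frontier D → HasSupportingCone D r c M ξ := by
    refine hK.induction_on (p := fun s => ∃ r c M : ℝ, 0 < r ∧ 0 < c ∧
      ∀ ξ ∈ s, ξ ∈ frontier D → HasSupportingCone D r c M ξ) ⟨1, 1, 1, one_pos, one_pos, by simp⟩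
      ?_ ?_ fun ξ₀ hξ₀ => ?_
    · rintro s t hst ⟨r, c, M, hr, hc, hs⟩
      exact ⟨r, c, M, hr, hc, fun ξ hξ => hs ξ (hst hξ)⟩
    · rintro s t ⟨r, c, M, hr, hc, hs⟩ ⟨r', c', M', hr', hc', ht⟩
      refine ⟨min r r', min c c', max M M', lt_min hr hr', lt_min hc hc', ?_⟩
      rintro ξ (hξ | hξ) hf
      · exact (hs ξ hξ hf).mono (min_le_left _ _) (min_le_left _ _) (le_max_left _ _)
      · exact (ht ξ hξ hf).mono (min_le_right _ _) (min_le_right _ _) (le_max_right _ _)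
    · obtain ⟨r, c, M, hr, hc, hs⟩ := h ξ₀ hξ₀
      exact ⟨ball ξ₀ r, mem_nhdsWithin_of_mem_nhds (ball_mem_nhds _ hr), r, c, M, hr, hc,
        fun ξ hξ hf => hs ξ hf hξ⟩
  obtain ⟨r, c, M, hr, hc, hs⟩ := hind
  exact ⟨r, c, M, hr, hc, fun ξ hξ => hs ξ hξ hξ⟩

end SupportingCones

section LogDepth

variable {E : Type*} [NormedAddCommGroup E]

/-- The scale on which the Kobayashi distance grows towards the boundary: `-log` of the boundary
distance, cut off below at `1`. -/
noncomputable def logDepth (D : Set E) (x : E) : ℝ :=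
  max 1 (-Real.log (bdist D x))

theorem one_le_logDepth (D : Set E) (x : E) : 1 ≤ logDepth D x :=
  le_max_left _ _

theorem logDepth_rpow_pos (D : Set E) (x : E) (p : ℝ) : 0 < logDepth D x ^ p :=
  Real.rpow_pos_of_pos (one_pos.trans_le (one_le_logDepth D x)) p

theorem logDepth_eq_neg_log {D : Set E} {x : E} (h : 1 < logDepth D x) :
    logDepth D x = -Real.log (bdist D x) :=
  max_eq_right_of_lt ((lt_max_iff.1 h).resolve_left (lt_irrefl 1))

theorem sub_le_logDepth {D : Set E} {x z : E} {M a : ℝ} (hz : 0 < bdist D z)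
    (hx : 0 < bdist D x) (hM : 0 < M) (hle : bdist D z ≤ M * bdist D x * Real.exp a) :
    -Real.log (bdist D x) - Real.log M - a ≤ logDepth D z := by
  have hlog := Real.log_le_log hz hle
  rw [Real.log_mul (by positivity) (Real.exp_ne_zero _), Real.log_mul hM.ne' hx.ne',
    Real.log_exp] at hlog
  exact le_max_of_le_right (by linarith)

theorem integral_norm_div_add_mul {δ c T : ℝ} {w : E} (hw : ‖w‖ = 1) (hδ : 0 < δ) (hc : 0 < c)
    (hT : 0 ≤ T) :
    ∫ t in 0..T, ‖w‖ / (δ + c * t) = (Real.log (δ + c * T) - Real.log δ) / c := by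
  have hend : 0 < δ + c * T := by positivity
  rw [hw, intervalIntegral.integral_comp_add_mul (fun u => 1 / u) hc.ne', mul_zero, add_zero,
    integral_one_div (notMem_uIcc_of_lt hδ hend), Real.log_div hend.ne' hδ.ne', smul_eq_mul,
    inv_mul_eq_div]

end LogDepth

section ConeDomains

variable {E : Type*} [NormedAddCommGroup E] [NormedSpace ℂ E] {D : Set E} {r c M s : ℝ} {x y : E}

/-- A bounded domain with supporting cones at all boundary points, with common constants. The
normalisations of `r`, `c`, `M` relative to `1` only simplify the estimates. -/
structure IsConeDomain (D : Set E) (r c M : ℝ) : Prop where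
  isOpen : IsOpen D
  isBounded : Bornology.IsBounded D
  isPreconnected : IsPreconnected D
  frontier_nonempty : (frontier D).Nonempty
  r_pos : 0 < r
  r_le_one : r ≤ 1
  c_pos : 0 < c
  c_le_one : c ≤ 1
  one_le_M : 1 ≤ M
  hasSupportingCone : ∀ ξ ∈ frontier D, HasSupportingCone D r c M ξ

theorem CConvex.isPreconnected (hC : CConvex D) : IsPreconnected D := by
  refine isPreconnected_of_forall_pair fun x hx y hy => ?_
  rcases eq_or_ne y x with rfl | hxy
  · exact ⟨{y}, by simpa, mem_singleton y, mem_singleton y, isPreconnected_singleton⟩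
  · have hx' : x ∈ D ∩ {w | ∃ c : ℂ, w = x + c • (y - x)} := ⟨hx, 0, by simp⟩
    have hy' : y ∈ D ∩ {w | ∃ c : ℂ, w = x + c • (y - x)} := ⟨hy, 1, by simp⟩
    exact ⟨_, inter_subset_left, hx', hy',
      (hC x (y - x) (sub_ne_zero.2 hxy) ⟨x, hx'⟩).1.isPreconnected⟩

theorem exists_isConeDomain [ProperSpace E] [Nontrivial E] (hD : IsOpen D) (hne : D.Nonempty)
    (hb : Bornology.IsBounded D) (hC : CConvex D)
    (h : ∀ ξ ∈ frontier D, ∃ W ρ, IsLocalDefiningFn D ξ W ρ) :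
    ∃ r c M : ℝ, IsConeDomain D r c M := by
  have hcompact : IsCompact (frontier D) := isCompact_of_isClosed_isBounded isClosed_frontier
    (hb.closure.subset frontier_subset_closure)
  obtain ⟨r, c, M, hr, hc, hcone⟩ := exists_hasSupportingCone_of_near hcompact fun ξ hξ => by
    obtain ⟨W, ρ, hρ⟩ := h ξ hξ
    exact hC.exists_hasSupportingCone_near hD hρ
  have hproper : D ≠ univ := by
    rintro rfl
    exact NormedSpace.unbounded_univ ℂ E hb
  exact ⟨min r 1, min c 1, max M 1, hD, hb, hC.isPreconnected,
    nonempty_frontier_iff.2 ⟨hne, hproper⟩, lt_min hr one_pos, min_le_right _ _,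
    lt_min hc one_pos, min_le_right _ _, le_max_right _ _,
    fun ξ hξ => (hcone ξ hξ).mono (min_le_left _ _) (min_le_left _ _) (le_max_left _ _)⟩

theorem JoinedWithin.of_dist_le [CompleteSpace E] [SecondCountableTopology E] (hD : IsOpen D)
    (hs : 0 < s) (hb : ball x (2 * s) ⊆ D) (hy : dist y x ≤ s) : JoinedWithin D 1 x y := by
  have hseg := JoinedWithin.of_segment hD (x := x) (w := y - x) zero_le_one
    (φ := fun _ => s) continuousOn_const (fun _ _ => hs) fun t ht => by
      refine (ball_subset_ball' ?_).trans hb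
      rw [dist_eq_norm, add_sub_cancel_left, norm_smul, Real.norm_of_nonneg ht.1, ← dist_eq_norm]
      linarith [mul_le_mul ht.2 hy dist_nonneg zero_le_one]
  rw [one_smul, add_sub_cancel] at hseg
  refine hseg.mono ?_
  rw [intervalIntegral.integral_const, sub_zero, one_smul, div_le_one hs, ← dist_eq_norm]
  exact hy

theorem eventually_joinedWithin_one [CompleteSpace E] [SecondCountableTopology E] (hD : IsOpen D)
    (hx : x ∈ D) : ∀ᶠ y in 𝓝 x, JoinedWithin D 1 x y := by
  obtain ⟨s, hs, hb⟩ := Metric.isOpen_iff.1 hD x hx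
  filter_upwards [closedBall_mem_nhds x (half_pos hs)] with y hy
  exact .of_dist_le hD (half_pos hs) (by rwa [mul_div_cancel₀ _ two_ne_zero]) hy

theorem exists_joinedWithin [CompleteSpace E] [SecondCountableTopology E] (hD : IsOpen D)
    (hconn : IsPreconnected D) (hx : x ∈ D) (hy : y ∈ D) : ∃ B, JoinedWithin D B x y := by
  refine hconn.induction₂ (fun x y => ∃ B, JoinedWithin D B x y) (fun x hx => ?_) ?_ ?_ hx hy
  · exact nhdsWithin_le_nhds ((eventually_joinedWithin_one hD hx).mono fun y hy => ⟨1, hy⟩)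
  · rintro x y z - - - ⟨B, hB⟩ ⟨B', hB'⟩
    exact ⟨_, hB.trans hB' hD⟩
  · rintro x y - - ⟨B, hB⟩
    exact ⟨B, hB.symm hD⟩

theorem exists_forall_joinedWithin_of_isCompact [CompleteSpace E] [SecondCountableTopology E]
    (hD : IsOpen D) (hconn : IsPreconnected D) {K : Set E} (hK : IsCompact K) (hKD : K ⊆ D) :
    ∃ B, 0 ≤ B ∧ ∀ x ∈ K, ∀ y ∈ K, JoinedWithin D B x y := by
  rcases K.eq_empty_or_nonempty with rfl | ⟨o, ho⟩
  · exact ⟨0, le_rfl, by simp⟩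
  have hstar : ∃ B, 0 ≤ B ∧ ∀ z ∈ K, JoinedWithin D B o z := by
    refine hK.induction_on (p := fun s => ∃ B, 0 ≤ B ∧ ∀ z ∈ s, JoinedWithin D B o z)
      ⟨0, le_rfl, by simp⟩ ?_ ?_ fun x hx => ?_
    · rintro s t hst ⟨B, hB, ht⟩
      exact ⟨B, hB, fun z hz => ht z (hst hz)⟩
    · rintro s t ⟨B, hB, hs⟩ ⟨B', -, ht⟩
      refine ⟨max B B', le_max_of_le_left hB, ?_⟩
      rintro z (hz | hz)
      · exact (hs z hz).mono (le_max_left _ _)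
      · exact (ht z hz).mono (le_max_right _ _)
    · obtain ⟨B, hB⟩ := exists_joinedWithin hD hconn (hKD ho) (hKD hx)
      exact ⟨_, mem_nhdsWithin_of_mem_nhds (eventually_joinedWithin_one hD (hKD hx)),
        max 0 (B + 1), le_max_left _ _, fun y hy => (hB.trans hy hD).mono (le_max_right _ _)⟩
  obtain ⟨B, hB, hstar⟩ := hstar
  exact ⟨B + B, by positivity, fun x hx y hy => ((hstar x hx).symm hD).trans (hstar y hy) hD⟩

namespace IsConeDomain

theorem bdist_pos (h : IsConeDomain D r c M) (hx : x ∈ D) : 0 < bdist D x :=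
  _root_.bdist_pos h.isOpen h.frontier_nonempty hx

theorem logDepth_le_logDepth (h : IsConeDomain D r c M) (hx : x ∈ D)
    (hxy : bdist D x ≤ bdist D y) : logDepth D y ≤ logDepth D x :=
  max_le_max le_rfl (neg_le_neg (Real.log_le_log (h.bdist_pos hx) hxy))

theorem continuousOn_logDepth (h : IsConeDomain D r c M) : ContinuousOn (logDepth D) D :=
  ContinuousOn.sup continuousOn_const
    (((continuous_infDist_pt _).continuousOn.log fun _ hx => (h.bdist_pos hx).ne').neg)

theorem exists_frontier_bdist_eq [ProperSpace E] (h : IsConeDomain D r c M) (x : E) :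
    ∃ ξ ∈ frontier D, bdist D x = dist x ξ :=
  isClosed_frontier.exists_infDist_eq_dist h.frontier_nonempty x

theorem exists_supporting_functional (h : IsConeDomain D r c M) {ξ : E} (hξ : ξ ∈ frontier D) :
    ∃ L : E →L[ℂ] ℂ, ‖L‖ ≤ M ∧ (∀ y ∈ D, L (y - ξ) ≠ 0) ∧
      (∀ y ∈ D, bdist D y ≤ ‖L (y - ξ)‖) ∧
      ∀ y ∈ D, dist y ξ < r / M → -L (y - ξ) ∈ Complex.slitPlane := by
  obtain ⟨n, L, hn, hL, hLM, hne, hcone⟩ := h.hasSupportingCone ξ hξ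
  have hM : 0 < M := one_pos.trans_le h.one_le_M
  refine ⟨L, hLM, hne,
    fun y hy => bdist_le_norm_apply h.isOpen hn hL hne hy, fun y hy hyξ => ?_⟩
  by_contra hslit
  obtain ⟨τ, hτ, hLτ⟩ : ∃ τ : ℝ, 0 ≤ τ ∧ L (y - ξ) = τ := by
    simp only [Complex.mem_slitPlane_iff, Complex.neg_re, Complex.neg_im, not_or, not_lt,
      neg_nonpos, not_not, neg_eq_zero] at hslit
    exact ⟨_, hslit.1, Complex.ext rfl hslit.2⟩
  have hτr : τ ≤ r := calc
    τ = ‖L (y - ξ)‖ := by rw [hLτ, Complex.norm_real, Real.norm_of_nonneg hτ]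
    _ ≤ M * (r / M) := L.le_of_opNorm_le_of_le hLM (dist_eq_norm y ξ ▸ hyξ.le)
    _ = r := mul_div_cancel₀ r hM.ne'
  have hradius : 0 < min (bdist D y) r + c * τ :=
    add_pos_of_pos_of_nonneg (lt_min (h.bdist_pos hy) h.r_pos) (mul_nonneg h.c_pos.le hτ)
  refine hne _ (hcone y hy (hyξ.trans_le (div_le_self h.r_pos.le h.one_le_M)) τ hτ hτr
    (mem_ball_self hradius)) ?_
  rw [sub_right_comm, map_sub, ← Complex.coe_smul, map_smul, hL, hLτ, smul_eq_mul, mul_one,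
    sub_self]

theorem exists_joinedWithin_core [ProperSpace E] (h : IsConeDomain D r c M) (hx : x ∈ D) :
    ∃ z ∈ D, c * r ≤ bdist D z ∧ JoinedWithin D (2 / c * logDepth D x) x z := by
  have hl := one_le_logDepth D x
  have hc := h.c_pos
  have hr := h.r_pos
  rcases le_or_gt r (bdist D x) with hb | hb
  · exact ⟨x, hx, (mul_le_of_le_one_left hr.le h.c_le_one).trans hb,
      (JoinedWithin.refl hx).mono (by positivity)⟩
  obtain ⟨ξ, hξ, hξx⟩ := h.exists_frontier_bdist_eq x
  obtain ⟨n, -, hn, -, -, -, hcone⟩ := h.hasSupportingCone ξ hξ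
  have hδ := h.bdist_pos hx
  have hball : ∀ t ∈ Icc 0 r, ball (x + t • -n) (bdist D x + c * t) ⊆ D := fun t ht => by
    have ht' := hcone x hx (hξx ▸ hb) t ht.1 ht.2
    rwa [min_eq_left hb.le, sub_eq_add_neg, ← smul_neg] at ht'
  have hpos : ∀ t ∈ Icc 0 r, 0 < bdist D x + c * t := fun t ht =>
    add_pos_of_pos_of_nonneg hδ (mul_nonneg hc.le ht.1)
  have hseg := JoinedWithin.of_segment h.isOpen hr.le (by fun_prop) hpos hball
  have hend := hball r (right_mem_Icc.2 hr.le)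
  refine ⟨x + r • -n, hend (mem_ball_self (hpos r (right_mem_Icc.2 hr.le))), ?_, hseg.mono ?_⟩
  · linarith [le_bdist_of_ball_subset h.isOpen h.frontier_nonempty hend]
  · rw [integral_norm_div_add_mul (by rwa [norm_neg]) hδ hc hr.le, div_mul_eq_mul_div]
    have hlog : Real.log (bdist D x + c * r) ≤ 1 := by
      have hcr : c * r ≤ 1 := mul_le_one₀ h.c_le_one hr.le h.r_le_one
      linarith [Real.log_le_sub_one_of_pos (show 0 < bdist D x + c * r by positivity),
        h.r_le_one]
    have hdepth : -Real.log (bdist D x) ≤ logDepth D x := le_max_right _ _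
    gcongr
    linarith

theorem isCompact_core [ProperSpace E] (h : IsConeDomain D r c M) (s : ℝ) :
    IsCompact (closure D ∩ {x | s ≤ bdist D x}) :=
  isCompact_of_isClosed_isBounded
    (isClosed_closure.inter (isClosed_le continuous_const (continuous_infDist_pt _)))
    (h.isBounded.closure.subset inter_subset_left)

theorem exists_joinedWithin_logDepth [ProperSpace E] (h : IsConeDomain D r c M) :
    ∃ A, 0 < A ∧ ∀ x ∈ D, ∀ y ∈ D, JoinedWithin D (A * (logDepth D x + logDepth D y)) x y := by
  have hc := h.c_pos
  have hcore : closure D ∩ {x | c * r ≤ bdist D x} ⊆ D := fun x ⟨hx, hxr⟩ => by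
    rw [closure_eq_self_union_frontier] at hx
    refine hx.resolve_right fun hf => ?_
    have hzero : bdist D x = 0 := infDist_zero_of_mem hf
    exact (mul_pos hc h.r_pos).not_ge (hzero ▸ hxr)
  obtain ⟨B, hB, hjoin⟩ := exists_forall_joinedWithin_of_isCompact h.isOpen h.isPreconnected
    (h.isCompact_core (c * r)) hcore
  refine ⟨2 / c + B, by positivity, fun x hx y hy => ?_⟩
  obtain ⟨z, hz, hzr, hxz⟩ := h.exists_joinedWithin_core hx
  obtain ⟨w, hw, hwr, hyw⟩ := h.exists_joinedWithin_core hy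
  refine ((hxz.trans (hjoin z ⟨subset_closure hz, hzr⟩ w ⟨subset_closure hw, hwr⟩) h.isOpen).trans
    (hyw.symm h.isOpen) h.isOpen).mono ?_
  nlinarith [one_le_logDepth D x, one_le_logDepth D y]

end IsConeDomain

end ConeDomains

section SchwarzLemma

variable {h g : ℂ → ℂ} {R : ℝ}

open ComplexConjugate in
theorem norm_sub_le_norm_add_conj {w a : ℂ} (hw : 0 ≤ w.re) (ha : 0 ≤ a.re) :
    ‖w - a‖ ≤ ‖w + conj a‖ := by
  rw [← sq_le_sq₀ (norm_nonneg _) (norm_nonneg _), ← Complex.normSq_eq_norm_sq,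
    ← Complex.normSq_eq_norm_sq, Complex.normSq_apply, Complex.normSq_apply, Complex.sub_re,
    Complex.sub_im, Complex.add_re, Complex.add_im, Complex.conj_re, Complex.conj_im]
  linarith [mul_nonneg hw ha]

open ComplexConjugate in
theorem norm_deriv_le_of_re_pos (hR : 0 < R) (hd : DifferentiableOn ℂ h (ball 0 R))
    (hre : ∀ z ∈ ball (0 : ℂ) R, 0 < (h z).re) : ‖deriv h 0‖ ≤ 2 / R * ‖h 0‖ := by
  have h0 : (0 : ℂ) ∈ ball 0 R := mem_ball_self hR
  have hden : ∀ z ∈ ball (0 : ℂ) R, h z + conj (h 0) ≠ 0 := fun z hz hzero => by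
    have hre0 := congrArg Complex.re hzero
    rw [Complex.add_re, Complex.conj_re, Complex.zero_re] at hre0
    linarith [hre z hz, hre 0 h0]
  -- The Cayley transform sending the half plane to the disc and `h 0` to `0`.
  let φ : ℂ → ℂ := fun z => (h z - h 0) / (h z + conj (h 0))
  have hφ : DifferentiableOn ℂ φ (ball 0 R) :=
    (hd.sub (differentiableOn_const _)).div (hd.add (differentiableOn_const _)) hden
  have hmaps : MapsTo φ (ball 0 R) (closedBall (φ 0) 1) := fun z hz => by
    rw [show φ 0 = 0 by simp [φ], mem_closedBall, dist_zero_right, norm_div]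
    exact div_le_one_of_le₀ (norm_sub_le_norm_add_conj (hre z hz).le (hre 0 h0).le)
      (norm_nonneg _)
  have hderiv : deriv φ 0 = deriv h 0 / (h 0 + conj (h 0)) := by
    have hh := (hd.differentiableAt (ball_mem_nhds 0 hR)).hasDerivAt
    rw [((hh.sub_const (h 0)).fun_div (hh.add_const (conj (h 0))) (hden 0 h0)).deriv, sub_self,
      zero_mul, sub_zero, sq, mul_div_mul_right _ _ (hden 0 h0)]
  have hschwarz := Complex.norm_deriv_le_div_of_mapsTo_ball hφ hmaps hR
  rw [hderiv, norm_div, div_le_iff₀ (norm_pos_iff.2 (hden 0 h0))] at hschwarz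
  calc ‖deriv h 0‖ ≤ 1 / R * ‖h 0 + conj (h 0)‖ := hschwarz
    _ ≤ 1 / R * (‖h 0‖ + ‖h 0‖) := by
      gcongr
      simpa only [RCLike.norm_conj] using norm_add_le (h 0) (conj (h 0))
    _ = 2 / R * ‖h 0‖ := by ring

theorem re_exp_log_div_two_pos {w : ℂ} (hw : w ∈ Complex.slitPlane) :
    0 < (Complex.exp (Complex.log w / 2)).re := by
  have harg : w.arg < Real.pi :=
    (Complex.arg_le_pi w).lt_of_ne (Complex.mem_slitPlane_iff_arg.1 hw).1
  rw [Complex.exp_re, Complex.div_ofNat_im, Complex.log_im]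
  refine mul_pos (Real.exp_pos _) (Real.cos_pos_of_mem_Ioo ?_)
  constructor <;> linarith [Complex.neg_pi_lt_arg w]

theorem norm_deriv_le_of_mem_slitPlane (hR : 0 < R) (hd : DifferentiableOn ℂ g (ball 0 R))
    (hm : ∀ z ∈ ball (0 : ℂ) R, g z ∈ Complex.slitPlane) : ‖deriv g 0‖ ≤ 4 / R * ‖g 0‖ := by
  let h : ℂ → ℂ := fun z => Complex.exp (Complex.log (g z) / 2)
  have hh : DifferentiableOn ℂ h (ball 0 R) := ((hd.clog hm).div_const 2).cexp
  have hsq : ∀ z ∈ ball (0 : ℂ) R, g z = h z ^ 2 := fun z hz => by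
    rw [← Complex.exp_nat_mul, Nat.cast_ofNat, mul_div_cancel₀ _ two_ne_zero,
      Complex.exp_log (Complex.slitPlane_ne_zero (hm z hz))]
  have hderiv : deriv g 0 = 2 * h 0 * deriv h 0 := by
    have hev : g =ᶠ[𝓝 0] fun z => h z ^ 2 := by
      filter_upwards [ball_mem_nhds 0 hR] with z hz using hsq z hz
    have hpow := (hh.differentiableAt (ball_mem_nhds 0 hR)).hasDerivAt.fun_pow 2
    rw [hev.deriv_eq, hpow.deriv, Nat.cast_ofNat, pow_one]
  have hschwarz := norm_deriv_le_of_re_pos hR hh fun z hz => re_exp_log_div_two_pos (hm z hz)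
  rw [hderiv, hsq 0 (mem_ball_self hR), norm_mul, norm_mul, norm_pow, Complex.norm_ofNat]
  calc 2 * ‖h 0‖ * ‖deriv h 0‖ ≤ 2 * ‖h 0‖ * (2 / R * ‖h 0‖) := by gcongr
    _ = 4 / R * ‖h 0‖ ^ 2 := by ring

end SchwarzLemma

section AgreeNear

variable {E : Type*} [PseudoMetricSpace E] {Ω D : Set E} {s : ℝ} {x y : E}

/-- `x` is a point of `D` near which, up to distance `s`, the larger set `Ω` coincides with `D`. -/
def AgreeNear (Ω D : Set E) (s : ℝ) (x : E) : Prop :=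
  x ∈ D ∧ ball x s ∩ Ω ⊆ D

theorem AgreeNear.half (h : AgreeNear Ω D s x) (hs : 0 < s) (hy : y ∈ Ω)
    (hd : dist y x ≤ s / 2) : AgreeNear Ω D (s / 2) y := by
  refine ⟨h.2 ⟨hd.trans_lt (half_lt_self hs), hy⟩, fun z ⟨hzy, hz⟩ => h.2 ⟨?_, hz⟩⟩
  exact ball_subset_ball' (by linarith) hzy

end AgreeNear

section Localization

variable {E : Type*} [NormedAddCommGroup E] [NormedSpace ℂ E] {Ω D : Set E}
  {r c M R C ν s : ℝ} {x y v : E} {f : ℂ → E}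

theorem IsDisc.mem (hf : IsDisc Ω f x) : x ∈ Ω :=
  hf.map_zero ▸ hf.mapsTo (mem_ball_self one_pos)

theorem IsDisc.mapsTo_closedBall (hf : IsDisc Ω f x) (hR : ∀ x ∈ Ω, ∀ y ∈ Ω, dist x y ≤ R) :
    MapsTo f (ball 0 1) (closedBall (f 0) R) :=
  fun _ hw => hR _ (hf.mapsTo hw) _ (hf.map_zero ▸ hf.mem)

theorem IsDisc.dist_le (hf : IsDisc Ω f x) (hR : ∀ x ∈ Ω, ∀ y ∈ Ω, dist x y ≤ R) {z : ℂ}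
    (hz : ‖z‖ < 1) : dist (f z) x ≤ R * ‖z‖ := by
  have hle := Complex.dist_le_div_mul_dist_of_mapsTo_ball hf.differentiableOn
    (hf.mapsTo_closedBall hR) (mem_ball_zero_iff.2 hz)
  rwa [div_one, dist_zero_right, hf.map_zero] at hle

theorem IsDisc.norm_deriv_le (hf : IsDisc Ω f x) (hR : ∀ x ∈ Ω, ∀ y ∈ Ω, dist x y ≤ R) :
    ‖deriv f 0‖ ≤ R := by
  have hle := Complex.norm_deriv_le_div_of_mapsTo_ball hf.differentiableOn
    (hf.mapsTo_closedBall hR) one_pos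
  rwa [div_one] at hle

theorem AgreeNear.apply_mem (h : AgreeNear Ω D s x) (hf : IsDisc Ω f x) (hRpos : 0 < R)
    (hR : ∀ x ∈ Ω, ∀ y ∈ Ω, dist x y ≤ R) {z : ℂ} (hz : ‖z‖ < min 1 (s / R)) : f z ∈ D := by
  obtain ⟨hz1, hzs⟩ := lt_min_iff.1 hz
  refine h.2 ⟨(hf.dist_le hR hz1).trans_lt ?_, hf.mapsTo (mem_ball_zero_iff.2 hz1)⟩
  rwa [mul_comm, ← lt_div_iff₀ hRpos]

/-- `D` is a subdomain of the bounded open set `Ω` of diameter at most `R`, and `D` is a cone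
domain satisfying the log-type estimate with constants `C`, `ν`. The domain `Ω ∩ U` of the
localization theorem is of this kind. -/
structure IsLogTypeSubdomain (Ω D : Set E) (r c M R C ν : ℝ) : Prop
    extends IsConeDomain D r c M where
  isOpen_ambient : IsOpen Ω
  subset : D ⊆ Ω
  R_pos : 0 < R
  dist_le : ∀ x ∈ Ω, ∀ y ∈ Ω, dist x y ≤ R
  C_pos : 0 < C
  ν_pos : 0 < ν
  bdistDir_le : ∀ z ∈ D, ∀ v : E, v ≠ 0 → bdistDir D z v ≤ C / |Real.log (bdist D z)| ^ (1 + ν)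

theorem one_le_rpow_mul_rpow_neg {l Λ p : ℝ} (hl : 0 < l) (hΛ : l ≤ Λ) (hp : 0 ≤ p) :
    1 ≤ Λ ^ p * l ^ (-p) := by
  rw [Real.rpow_neg hl.le, ← div_eq_mul_inv, one_le_div (Real.rpow_pos_of_pos hl p)]
  exact Real.rpow_le_rpow hl.le hΛ hp

theorem isClosed_setOf_add_smul (x v : E) : IsClosed {w | ∃ c : ℂ, w = x + c • v} := by
  have hpre : {w | ∃ c : ℂ, w = x + c • v} = (· - x) ⁻¹' (Submodule.span ℂ {v} : Set E) := by
    ext w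
    simp only [mem_ofPred_eq, mem_preimage, SetLike.mem_coe, Submodule.mem_span_singleton,
      eq_sub_iff_add_eq', eq_comm]
  rw [hpre]
  exact (Submodule.closed_of_finiteDimensional _).preimage (continuous_sub_right x)

theorem isPreconnected_setOf_add_smul (x v : E) :
    IsPreconnected {w | ∃ c : ℂ, w = x + c • v} := by
  have hrange : {w | ∃ c : ℂ, w = x + c • v} = range fun c : ℂ => x + c • v := by
    ext w
    simp only [mem_ofPred_eq, mem_range, eq_comm]
  rw [hrange]
  exact isPreconnected_range (by fun_prop)

theorem not_setOf_add_smul_subset (hb : Bornology.IsBounded D) (hv : v ≠ 0) :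
    ¬ {w | ∃ c : ℂ, w = x + c • v} ⊆ D := fun hsub => by
  obtain ⟨B, hB⟩ := hb.exists_norm_le
  obtain ⟨c, hc⟩ := NormedSpace.exists_lt_norm ℂ ℂ ((B + ‖x‖) / ‖v‖)
  rw [div_lt_iff₀ (norm_pos_iff.2 hv), ← norm_smul] at hc
  have hle := (norm_le_add_norm_add (c • v) x).trans
    (add_le_add_left (hB _ (hsub ⟨c, add_comm _ _⟩)) _)
  linarith

theorem exists_add_smul_mem_frontier [ProperSpace E] (hD : IsOpen D)
    (hb : Bornology.IsBounded D) (hx : x ∈ D) (hv : v ≠ 0) :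
    ∃ a : ℂ, x + a • v ∈ frontier D ∧ ‖a • v‖ = bdistDir D x v := by
  have hne : (frontier D ∩ {w | ∃ c : ℂ, w = x + c • v}).Nonempty := by
    by_contra hempty
    refine not_setOf_add_smul_subset hb hv (subset_of_disjoint_frontier hD
      (isPreconnected_setOf_add_smul x v) ⟨x, ⟨0, by simp⟩, hx⟩ ?_)
    rwa [disjoint_iff_inter_eq_empty, inter_comm, ← not_nonempty_iff_eq_empty]
  obtain ⟨ξ, ⟨hξ, a, rfl⟩, hdist⟩ :=
    (isClosed_frontier.inter (isClosed_setOf_add_smul x v)).exists_infDist_eq_dist hne x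
  refine ⟨a, hξ, ?_⟩
  rw [bdistDir, hdist, dist_self_add_right]

namespace IsLogTypeSubdomain

theorem exists_norm_functional_deriv_le (h : IsLogTypeSubdomain Ω D r c M R C ν) (hs : 0 < s) :
    ∃ C₁, 0 < C₁ ∧ ∀ x, AgreeNear Ω D s x → ∀ ξ, dist x ξ < r / (2 * M) → ∀ L : E →L[ℂ] ℂ,
      (∀ y ∈ D, dist y ξ < r / M → -L (y - ξ) ∈ Complex.slitPlane) →
      ∀ f, IsDisc Ω f x → ‖L (deriv f 0)‖ ≤ C₁ * ‖L (x - ξ)‖ := by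
  have hM : 0 < M := one_pos.trans_le h.one_le_M
  have hr := h.r_pos
  have hR := h.R_pos
  let κ := min 1 (min s (r / (2 * M)) / R)
  have hκ : 0 < κ := by positivity
  refine ⟨4 / κ, by positivity, fun x hx ξ hξ L hL f hf => ?_⟩
  have hslit : ∀ z ∈ ball (0 : ℂ) κ, -L (f z - ξ) ∈ Complex.slitPlane := fun z hz => by
    rw [mem_ball_zero_iff, lt_min_iff, lt_div_iff₀' hR] at hz
    obtain ⟨hzs, hzr⟩ := lt_min_iff.1 ((hf.dist_le h.dist_le hz.1).trans_lt hz.2)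
    refine hL _ (hx.2 ⟨hzs, hf.mapsTo (mem_ball_zero_iff.2 hz.1)⟩) ?_
    calc dist (f z) ξ ≤ dist (f z) x + dist x ξ := dist_triangle _ _ _
      _ < r / (2 * M) + r / (2 * M) := add_lt_add hzr hξ
      _ = r / M := by field_simp; ring
  have hdiff : DifferentiableOn ℂ (fun z => -L (f z - ξ)) (ball 0 κ) :=
    (L.differentiable.comp_differentiableOn ((hf.differentiableOn.mono
      (ball_subset_ball (min_le_left _ _))).sub (differentiableOn_const _))).neg
  have hderiv : HasDerivAt (fun z => -L (f z - ξ)) (-L (deriv f 0)) 0 :=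
    (L.hasFDerivAt.comp_hasDerivAt (0 : ℂ) (hf.hasDerivAt_zero.sub_const ξ)).neg
  have hschwarz := norm_deriv_le_of_mem_slitPlane hκ hdiff hslit
  rwa [hderiv.deriv, norm_neg, norm_neg, hf.map_zero] at hschwarz

theorem bdistDir_le_rpow (h : IsLogTypeSubdomain Ω D r c M R C ν) (hx : x ∈ D) (hv : v ≠ 0)
    (hl : 1 < logDepth D x) : bdistDir D x v ≤ C * logDepth D x ^ (-(1 + ν)) := by
  have hle := h.bdistDir_le x hx v hv
  rwa [← abs_neg, ← logDepth_eq_neg_log hl, abs_of_pos (one_pos.trans hl), div_eq_mul_inv,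
    ← Real.rpow_neg (one_pos.trans hl).le] at hle

theorem exists_forall_rpow_neg_lt (h : IsLogTypeSubdomain Ω D r c M R C ν) :
    ∃ Λ : ℝ, 1 ≤ Λ ∧ ∀ l, Λ < l → C * l ^ (-(1 + ν)) < r / (2 * M) := by
  have hM : 0 < M := one_pos.trans_le h.one_le_M
  have hr := h.r_pos
  have hlim : Tendsto (fun l : ℝ => C * l ^ (-(1 + ν))) atTop (𝓝 0) := by
    simpa using (tendsto_rpow_neg_atTop (add_pos one_pos h.ν_pos)).const_mul C
  obtain ⟨Λ, hΛ⟩ :=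
    (hlim.eventually_lt_const (by positivity : 0 < r / (2 * M))).exists_forall_of_atTop
  exact ⟨max Λ 1, le_max_right _ _, fun l hl => hΛ l ((le_max_left _ _).trans hl.le)⟩

/- Let `x + a v` be a boundary point nearest to `x` in the direction `v = deriv f 0`. For a
supporting functional `L` there, the Schwarz lemma reads `|L v| ≤ C₁ |a| |L v|`, so `1 ≤ C₁ |a|`. -/
theorem exists_norm_deriv_le_bdistDir [ProperSpace E] (h : IsLogTypeSubdomain Ω D r c M R C ν)
    (hs : 0 < s) :
    ∃ C₁, 0 < C₁ ∧ ∀ x, AgreeNear Ω D s x → ∀ f, IsDisc Ω f x → deriv f 0 ≠ 0 →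
      bdistDir D x (deriv f 0) < r / (2 * M) → ‖deriv f 0‖ ≤ C₁ * bdistDir D x (deriv f 0) := by
  obtain ⟨C₁, hC₁, hL⟩ := h.exists_norm_functional_deriv_le hs
  refine ⟨C₁, hC₁, fun x hx f hf hv hnear => ?_⟩
  obtain ⟨a, ha, hdir⟩ := exists_add_smul_mem_frontier h.isOpen h.isBounded hx.1 hv
  obtain ⟨L, -, hLne, -, hLslit⟩ := h.exists_supporting_functional ha
  have hLx := hLne x hx.1
  have hLf := hL x hx _ (by rwa [dist_self_add_right, hdir]) L hLslit f hf
  rw [sub_add_cancel_left, map_neg, map_smul, smul_eq_mul] at hLx hLf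
  have hLv : L (deriv f 0) ≠ 0 := fun h0 => hLx (by rw [h0, mul_zero, neg_zero])
  rw [norm_neg, norm_mul, ← mul_assoc] at hLf
  have hone : 1 ≤ C₁ * ‖a‖ := (le_mul_iff_one_le_left (norm_pos_iff.2 hLv)).1 hLf
  calc ‖deriv f 0‖ ≤ C₁ * ‖a‖ * ‖deriv f 0‖ := le_mul_of_one_le_left (norm_nonneg _) hone
    _ = C₁ * bdistDir D x (deriv f 0) := by rw [← hdir, norm_smul, mul_assoc]

theorem exists_norm_deriv_le [ProperSpace E] (h : IsLogTypeSubdomain Ω D r c M R C ν)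
    (hs : 0 < s) :
    ∃ C₂, 0 < C₂ ∧ ∀ x, AgreeNear Ω D s x → ∀ f, IsDisc Ω f x →
      ‖deriv f 0‖ ≤ C₂ * logDepth D x ^ (-(1 + ν)) := by
  obtain ⟨C₁, hC₁, hdir⟩ := h.exists_norm_deriv_le_bdistDir hs
  obtain ⟨Λ, hΛ1, hΛ⟩ := h.exists_forall_rpow_neg_lt
  have hν := h.ν_pos
  have hR := h.R_pos
  refine ⟨max (R * Λ ^ (1 + ν)) (C₁ * C), lt_max_of_lt_right (mul_pos hC₁ h.C_pos),
    fun x hx f hf => ?_⟩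
  have hpow := logDepth_rpow_pos D x (-(1 + ν))
  rcases le_or_gt (logDepth D x) Λ with hle | hgt
  · have hone := one_le_rpow_mul_rpow_neg (one_pos.trans_le (one_le_logDepth D x)) hle
      (by positivity : 0 ≤ 1 + ν)
    calc ‖deriv f 0‖ ≤ R * (Λ ^ (1 + ν) * logDepth D x ^ (-(1 + ν))) :=
          (hf.norm_deriv_le h.dist_le).trans (le_mul_of_one_le_right hR.le hone)
      _ = R * Λ ^ (1 + ν) * logDepth D x ^ (-(1 + ν)) := (mul_assoc _ _ _).symm
      _ ≤ _ := by gcongr; exact le_max_left _ _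
  · rcases eq_or_ne (deriv f 0) 0 with hv | hv
    · rw [hv, norm_zero]
      positivity
    have hdist := h.bdistDir_le_rpow hx.1 hv (hΛ1.trans_lt hgt)
    calc ‖deriv f 0‖ ≤ C₁ * bdistDir D x (deriv f 0) :=
          hdir x hx f hf hv (hdist.trans_lt (hΛ _ hgt))
      _ ≤ C₁ * (C * logDepth D x ^ (-(1 + ν))) := by gcongr
      _ = C₁ * C * logDepth D x ^ (-(1 + ν)) := (mul_assoc _ _ _).symm
      _ ≤ _ := by gcongr; exact le_max_right _ _

theorem exists_norm_le_kobMetric [ProperSpace E] (h : IsLogTypeSubdomain Ω D r c M R C ν)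
    (hs : 0 < s) :
    ∃ C₂, 0 < C₂ ∧ ∀ x, AgreeNear Ω D s x → ∀ v,
      ‖v‖ ≤ C₂ * logDepth D x ^ (-(1 + ν)) * kobMetric Ω x v := by
  obtain ⟨C₂, hC₂, hderiv⟩ := h.exists_norm_deriv_le hs
  refine ⟨C₂, hC₂, fun x hx v => ?_⟩
  have hpow := logDepth_rpow_pos D x (-(1 + ν))
  rw [← div_le_iff₀' (by positivity)]
  refine le_kobMetric h.isOpen_ambient (h.subset hx.1) fun f ξ hf hv => ?_
  rw [div_le_iff₀ (by positivity), ← hv, norm_smul]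
  gcongr
  exact hderiv x hx f hf

end IsLogTypeSubdomain

end Localization

section Escape

theorem exists_eq_and_forall_Ico_lt {g : ℝ → ℝ} {a b c : ℝ} (hab : a ≤ b)
    (hg : ContinuousOn g (Icc a b)) (ha : g a ≤ c) (hb : c ≤ g b) :
    ∃ t ∈ Icc a b, g t = c ∧ ∀ u ∈ Ico a t, g u < c := by
  have hcompact : IsCompact (Icc a b ∩ g ⁻¹' Ici c) :=
    isCompact_Icc.of_isClosed_subset (hg.preimage_isClosed_of_isClosed isClosed_Icc isClosed_Ici)
      inter_subset_left
  obtain ⟨t, ⟨ht, hct⟩, hleast⟩ := hcompact.exists_isLeast ⟨b, right_mem_Icc.2 hab, hb⟩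
  obtain ⟨u, hu, rfl⟩ :=
    intermediate_value_Icc ht.1 (hg.mono (Icc_subset_Icc_right ht.2)) ⟨ha, hct⟩
  have hut : t ≤ u := hleast ⟨⟨hu.1, hu.2.trans ht.2⟩, mem_preimage.2 self_mem_Ici⟩
  refine ⟨t, ht, by rw [hu.2.antisymm hut], fun v hv => not_le.1 fun hcv => ?_⟩
  exact (hleast ⟨⟨hv.1, hv.2.le.trans ht.2⟩, hcv⟩).not_gt hv.2

theorem forall_lt_of_forall_Ico_lt {g : ℝ → ℝ} {T b : ℝ} (hg : ContinuousOn g (Icc 0 T))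
    (hstep : ∀ t ∈ Icc 0 T, (∀ τ ∈ Ico 0 t, g τ < b) → g t < b) : ∀ t ∈ Icc 0 T, g t < b := by
  by_contra! ⟨u, hu, hbu⟩
  have hstart : g 0 < b :=
    hstep 0 ⟨le_rfl, hu.1.trans hu.2⟩ fun τ hτ => absurd hτ.1 hτ.2.not_ge
  obtain ⟨t, ht, hbt, hbefore⟩ :=
    exists_eq_and_forall_Ico_lt hu.1 (hg.mono (Icc_subset_Icc_right hu.2)) hstart.le hbu
  exact (hstep t ⟨ht.1, ht.2.trans hu.2⟩ hbefore).ne hbt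

theorem eventually_add_mul_log_le_half (A B : ℝ) :
    ∀ᶠ l : ℝ in atTop, A + B * Real.log l ≤ l / 2 := by
  have hlittle : (fun l : ℝ => A + B * Real.log l) =o[atTop] (fun l : ℝ => l) :=
    (Asymptotics.isLittleO_const_id_atTop A).add (Real.isLittleO_log_id_atTop.const_mul_left B)
  filter_upwards [hlittle.def (one_half_pos (α := ℝ)), eventually_ge_atTop 0] with l hl hl0
  rw [Real.norm_of_nonneg hl0, one_div_mul_eq_div] at hl
  exact (Real.le_norm_self _).trans hl

theorem eventually_rpow_neg_mul_log_lt {p ε : ℝ} (A : ℝ) (hp : 0 < p) (hε : 0 < ε) :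
    ∀ᶠ l : ℝ in atTop, A * (l / 2) ^ (-p) * Real.log l < ε := by
  have hlim : Tendsto (fun l : ℝ => A * 2 ^ p * (Real.log l / l ^ p)) atTop (𝓝 0) := by
    simpa using (isLittleO_log_rpow_atTop hp).tendsto_div_nhds_zero.const_mul (A * 2 ^ p)
  filter_upwards [hlim.eventually_lt_const hε, eventually_ge_atTop 0] with l hl hl0
  rw [Real.rpow_neg (by positivity), Real.div_rpow hl0 two_pos.le]
  calc A * (l ^ p / 2 ^ p)⁻¹ * Real.log l = A * 2 ^ p * (Real.log l / l ^ p) := by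
        rw [inv_div]
        ring
    _ < ε := hl

variable {E : Type*} [NormedAddCommGroup E] [NormedSpace ℂ E] {Ω D : Set E} {f : ℂ → E} {x : E}
  {y : ℝ → E} {r c M R C ν s t : ℝ}

/-- A curve of Kobayashi speed at most one in `Ω`, witnessed by analytic discs: at each time
`τ ≥ 0` its velocity is the derivative of an analytic disc in `Ω` centred at `y τ`. -/
def IsDiscCurve (Ω : Set E) (y : ℝ → E) : Prop :=
  ∀ τ, 0 ≤ τ → ∃ F, IsDisc Ω F (y τ) ∧ HasDerivAt y (deriv F 0) τ

namespace IsDiscCurve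

theorem mem (hy : IsDiscCurve Ω y) (ht : 0 ≤ t) : y t ∈ Ω :=
  let ⟨_, hF, _⟩ := hy t ht
  hF.mem

theorem continuousOn (hy : IsDiscCurve Ω y) : ContinuousOn y (Icc 0 t) := fun τ hτ =>
  let ⟨_, _, hderiv⟩ := hy τ hτ.1
  hderiv.continuousAt.continuousWithinAt

theorem dist_le {B : ℝ} (hy : IsDiscCurve Ω y) (ht : 0 ≤ t)
    (hB : ∀ τ ∈ Ico 0 t, ∀ F, IsDisc Ω F (y τ) → ‖deriv F 0‖ ≤ B) :
    dist (y t) (y 0) ≤ B * t := by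
  choose! F hF hderiv using hy
  have hmean := norm_image_sub_le_of_norm_deriv_le_segment'
    (fun τ hτ => (hderiv τ hτ.1).hasDerivWithinAt) (fun τ hτ => hB τ hτ _ (hF τ hτ.1)) t
    ⟨ht, le_rfl⟩
  rwa [← dist_eq_norm, sub_zero] at hmean

end IsDiscCurve

/- The disc witnessing the speed at `f ζ`, `ζ = (1 - exp (-τ)) e`, is `f` restricted to the disc of
radius `1 - |ζ| = exp (-τ)` about `ζ`. -/
theorem IsDisc.isDiscCurve_radial (hf : IsDisc Ω f x) {e : ℂ} (he : ‖e‖ = 1) :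
    IsDiscCurve Ω fun τ : ℝ => f (((1 - Real.exp (-τ) : ℝ) : ℂ) * e) := fun τ hτ => by
  let q : ℝ := Real.exp (-τ)
  let ζ : ℂ := ((1 - q : ℝ) : ℂ) * e
  have hq1 : q ≤ 1 := Real.exp_le_one_iff.2 (neg_nonpos.2 hτ)
  have hq : 0 < q := Real.exp_pos _
  have hmaps : MapsTo (fun w : ℂ => ζ + w * (q * e)) (ball 0 1) (ball 0 1) := fun w hw => by
    rw [mem_ball_zero_iff] at hw ⊢
    calc ‖ζ + w * (q * e)‖ ≤ (1 - q) + ‖w‖ * q := by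
          refine (norm_add_le _ _).trans_eq ?_
          rw [norm_mul, norm_mul, norm_mul, he, Complex.norm_real, Complex.norm_real,
            Real.norm_of_nonneg (sub_nonneg.2 hq1), Real.norm_of_nonneg hq.le, mul_one, mul_one]
      _ < (1 - q) + 1 * q := by gcongr
      _ = 1 := by ring
  have hζ : ζ ∈ ball (0 : ℂ) 1 := by simpa using hmaps (mem_ball_self one_pos)
  have hfζ := (hf.differentiableOn.differentiableAt (isOpen_ball.mem_nhds hζ)).hasDerivAt
  have hdisc : HasDerivAt (fun w : ℂ => f (ζ + w * (q * e))) ((q * e) • deriv f ζ) 0 := by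
    have hinner : HasDerivAt (fun w : ℂ => ζ + w * (q * e)) (q * e) 0 := by
      simpa using ((hasDerivAt_id (0 : ℂ)).mul_const ((q : ℂ) * e)).const_add ζ
    exact HasDerivAt.scomp (0 : ℂ) (by simpa using hfζ) hinner
  have hradial : HasDerivAt (fun τ : ℝ => ((1 - Real.exp (-τ) : ℝ) : ℂ) * e) (q * e) τ := by
    have hexp : HasDerivAt (fun τ : ℝ => 1 - Real.exp (-τ)) q τ := by
      simpa using ((hasDerivAt_neg τ).exp).const_sub 1
    exact hexp.ofReal_comp.mul_const e
  refine ⟨fun w => f (ζ + w * (q * e)),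
    ⟨hf.differentiableOn.comp (by fun_prop) hmaps, hf.mapsTo.comp hmaps, by simp [ζ, q]⟩, ?_⟩
  rw [hdisc.deriv]
  exact hfζ.scomp τ hradial

namespace IsLogTypeSubdomain

/- Gronwall's inequality for `|L (y τ - ξ)|`, where `ξ` is a boundary point nearest to `y 0` and `L`
is a supporting functional at `ξ`. -/
theorem exists_bdist_discCurve_le [ProperSpace E] (h : IsLogTypeSubdomain Ω D r c M R C ν)
    (hs : 0 < s) :
    ∃ C₁, 0 < C₁ ∧ ∀ y, IsDiscCurve Ω y → bdist D (y 0) < r / (4 * M) → ∀ t,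
      (∀ τ ∈ Ico 0 t, AgreeNear Ω D s (y τ) ∧ dist (y τ) (y 0) < r / (4 * M)) →
      ∀ τ ∈ Ico 0 t, bdist D (y τ) ≤ M * bdist D (y 0) * Real.exp (C₁ * τ) := by
  obtain ⟨C₁, hC₁, hschwarz⟩ := h.exists_norm_functional_deriv_le hs
  refine ⟨C₁, hC₁, fun y hy hnear t hloc τ hτ => ?_⟩
  obtain ⟨ξ, hξ, hξdist⟩ := h.exists_frontier_bdist_eq (y 0)
  obtain ⟨L, hLM, -, hLbdist, hLslit⟩ := h.exists_supporting_functional hξ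
  choose! F hF hderiv using hy
  have hLderiv : ∀ τ, 0 ≤ τ → HasDerivAt (fun τ => L (y τ - ξ)) (L (deriv (F τ) 0)) τ :=
    fun τ hτ => (L.hasFDerivAt.restrictScalars ℝ).comp_hasDerivAt τ ((hderiv τ hτ).sub_const ξ)
  have hLzero : ‖L (y 0 - ξ)‖ ≤ M * bdist D (y 0) := by
    rw [hξdist, dist_eq_norm]
    exact L.le_of_opNorm_le hLM _
  have hgrowth : ∀ τ ∈ Ico 0 t, ‖L (deriv (F τ) 0)‖ ≤ C₁ * ‖L (y τ - ξ)‖ + 0 := fun τ hτ => by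
    rw [add_zero]
    refine hschwarz (y τ) (hloc τ hτ).1 ξ ?_ L hLslit (F τ) (hF τ hτ.1)
    calc dist (y τ) ξ ≤ dist (y τ) (y 0) + dist (y 0) ξ := dist_triangle _ _ _
      _ < r / (4 * M) + r / (4 * M) := add_lt_add (hloc τ hτ).2 (hξdist ▸ hnear)
      _ = r / (2 * M) := by ring
  have hgronwall := norm_le_gronwallBound_of_norm_deriv_right_le
    (fun τ hτ => (hLderiv τ hτ.1).continuousAt.continuousWithinAt)
    (fun τ hτ => (hLderiv τ hτ.1).hasDerivWithinAt) hLzero hgrowth τ ⟨hτ.1, hτ.2.le⟩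
  rw [gronwallBound_ε0, sub_zero] at hgronwall
  exact (hLbdist _ (hloc τ hτ).1.1).trans hgronwall

theorem exists_dist_discCurve_lt [ProperSpace E] (h : IsLogTypeSubdomain Ω D r c M R C ν)
    (hs : 0 < s) :
    ∃ Λ, 2 ≤ Λ ∧ ∀ y, IsDiscCurve Ω y → AgreeNear Ω D s (y 0) → Λ ≤ logDepth D (y 0) →
      ∀ t ∈ Icc 0 ((1 + ν) * Real.log (logDepth D (y 0))), dist (y t) (y 0) < s := by
  have hM : 0 < M := one_pos.trans_le h.one_le_M
  have hr := h.r_pos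
  have hν := h.ν_pos
  obtain ⟨C₁, hC₁, hdepth⟩ := h.exists_bdist_discCurve_le (half_pos hs)
  obtain ⟨C₂, hC₂, hspeed⟩ := h.exists_norm_deriv_le (half_pos hs)
  let b := min (s / 2) (r / (4 * M))
  have hb : 0 < b := by positivity
  obtain ⟨Λ, hΛ⟩ := ((Real.tendsto_exp_neg_atTop_nhds_zero.eventually_lt_const hb).and
    ((eventually_add_mul_log_le_half (Real.log M) (C₁ * (1 + ν))).and
    (eventually_rpow_neg_mul_log_lt (C₂ * (1 + ν)) (by positivity : 0 < 1 + ν)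
      hb))).exists_forall_of_atTop
  refine ⟨max Λ 2, le_max_right _ _, fun y hy hx hΛy => ?_⟩
  obtain ⟨hexp, hhalf, htravel⟩ := hΛ _ ((le_max_left _ _).trans hΛy)
  have hl : 2 ≤ logDepth D (y 0) := (le_max_right _ _).trans hΛy
  set l := logDepth D (y 0) with hl_def
  have hbdist : bdist D (y 0) = Real.exp (-l) := by
    rw [hl_def, logDepth_eq_neg_log (by linarith), neg_neg, Real.exp_log (h.bdist_pos hx.1)]
  have hexit : ∀ t ∈ Icc 0 ((1 + ν) * Real.log l), dist (y t) (y 0) < b := by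
    refine forall_lt_of_forall_Ico_lt
      ((continuous_id.dist continuous_const).comp_continuousOn hy.continuousOn)
      fun t ht hbefore => ?_
    have hagree : ∀ τ ∈ Ico 0 t, AgreeNear Ω D (s / 2) (y τ) := fun τ hτ =>
      hx.half hs (hy.mem hτ.1) ((hbefore τ hτ).le.trans (min_le_left _ _))
    have hdeep : ∀ τ ∈ Ico 0 t, l / 2 ≤ logDepth D (y τ) := fun τ hτ => by
      have hle := hdepth y hy (hbdist.trans_lt (hexp.trans_le (min_le_right _ _))) t
        (fun τ hτ => ⟨hagree τ hτ, (hbefore τ hτ).trans_le (min_le_right _ _)⟩) τ hτ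
      have hsub := sub_le_logDepth (h.bdist_pos (hagree τ hτ).1) (h.bdist_pos hx.1) hM hle
      have hτt : C₁ * τ ≤ C₁ * ((1 + ν) * Real.log l) := by
        gcongr
        exact hτ.2.le.trans ht.2
      rw [hbdist, Real.log_exp] at hsub
      linarith
    calc dist (y t) (y 0) ≤ C₂ * (l / 2) ^ (-(1 + ν)) * t :=
          hy.dist_le ht.1 fun τ hτ F hF => (hspeed _ (hagree τ hτ) F hF).trans <| by
            gcongr C₂ * ?_
            exact Real.rpow_le_rpow_of_nonpos (by positivity) (hdeep τ hτ) (by linarith)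
      _ ≤ C₂ * (l / 2) ^ (-(1 + ν)) * ((1 + ν) * Real.log l) := by
          gcongr
          exact ht.2
      _ < b := by linarith
  exact fun t ht => (hexit t ht).trans_le ((min_le_left _ _).trans (half_le_self hs.le))

/- `f z` lies on the radial curve through `z / |z|`, at time `-log (1 - |z|)`. -/
theorem exists_forall_disc_apply_mem [ProperSpace E] (h : IsLogTypeSubdomain Ω D r c M R C ν)
    (hs : 0 < s) :
    ∃ Λ : ℝ, 2 ≤ Λ ∧ ∀ x, AgreeNear Ω D s x → Λ ≤ logDepth D x → ∀ f, IsDisc Ω f x →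
      ∀ z : ℂ, ‖z‖ < 1 - logDepth D x ^ (-(1 + ν)) → f z ∈ D := by
  obtain ⟨Λ, hΛ, hexit⟩ := h.exists_dist_discCurve_lt hs
  refine ⟨Λ, hΛ, fun x hx hl f hf z hz => ?_⟩
  have hpow := logDepth_rpow_pos D x (-(1 + ν))
  have hl0 : 0 < logDepth D x := one_pos.trans_le (one_le_logDepth D x)
  rcases eq_or_ne z 0 with rfl | hz0
  · rw [hf.map_zero]
    exact hx.1
  let e : ℂ := z / (‖z‖ : ℂ)
  have he : ‖e‖ = 1 := by
    rw [norm_div, Complex.norm_real, norm_norm, div_self (norm_ne_zero_iff.2 hz0)]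
  have hy := hf.isDiscCurve_radial he
  set y : ℝ → E := fun τ => f (((1 - Real.exp (-τ) : ℝ) : ℂ) * e)
  have hz1 : 0 < 1 - ‖z‖ := by linarith
  have hy0 : y 0 = x := by simp [y, hf.map_zero]
  have hyz : y (-Real.log (1 - ‖z‖)) = f z := by
    simp only [y, e, neg_neg]
    rw [Real.exp_log hz1, sub_sub_cancel, mul_div_cancel₀ _ (by simpa using hz0)]
  have htime : -Real.log (1 - ‖z‖) ∈ Icc 0 ((1 + ν) * Real.log (logDepth D x)) := by
    refine ⟨neg_nonneg.2 (Real.log_nonpos hz1.le (by linarith [norm_nonneg z])), ?_⟩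
    have hlog := Real.log_le_log hpow (by linarith : _ ≤ 1 - ‖z‖)
    rw [Real.log_rpow hl0] at hlog
    linarith
  have hdist := hexit y hy (hy0 ▸ hx) (hy0 ▸ hl) _ (hy0 ▸ htime)
  rw [hyz, hy0] at hdist
  exact hx.2 ⟨hdist, hyz ▸ hy.mem htime.1⟩

end IsLogTypeSubdomain

theorem mul_kobMetric_le_of_forall_disc_mem {ρ : ℝ} {v : E} (hΩ : IsOpen Ω) (hx : x ∈ Ω)
    (hρ : 0 < ρ) (hρ1 : ρ ≤ 1) (h : ∀ f, IsDisc Ω f x → ∀ z : ℂ, ‖z‖ < ρ → f z ∈ D) :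
    ρ * kobMetric D x v ≤ kobMetric Ω x v := by
  refine le_kobMetric hΩ hx fun f ξ hf hv => ?_
  have hρ0 : (ρ : ℂ) ≠ 0 := Complex.ofReal_ne_zero.2 hρ.ne'
  have hscale : ∀ w ∈ ball (0 : ℂ) 1, ‖(ρ : ℂ) * w‖ < ρ := fun w hw => by
    rw [mem_ball_zero_iff] at hw
    rw [norm_mul, Complex.norm_real, Real.norm_of_nonneg hρ.le]
    exact mul_lt_of_lt_one_right hρ hw
  have hmaps : MapsTo (fun w : ℂ => (ρ : ℂ) * w) (ball 0 1) (ball 0 1) := fun w hw =>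
    mem_ball_zero_iff.2 ((hscale w hw).trans_le hρ1)
  have hdisc : IsDisc D (fun w => f (ρ * w)) x :=
    ⟨hf.differentiableOn.comp (by fun_prop) hmaps, fun w hw => h f hf _ (hscale w hw),
      by rw [mul_zero, hf.map_zero]⟩
  have hderiv : deriv (fun w : ℂ => f (ρ * w)) 0 = (ρ : ℂ) • deriv f 0 := by
    simpa using (hf.hasDerivAt_dilate_add_affine ρ 0 0).deriv
  have hle := hdisc.kobMetric_le (ξ := ξ / ρ) (by
    rw [hderiv, smul_smul, div_mul_cancel₀ _ hρ0, hv])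
  rwa [norm_div, Complex.norm_real, Real.norm_of_nonneg hρ.le, le_div_iff₀' hρ] at hle

namespace IsLogTypeSubdomain

theorem exists_kobMetric_le [ProperSpace E] (h : IsLogTypeSubdomain Ω D r c M R C ν)
    (hs : 0 < s) :
    ∃ C₃, 0 < C₃ ∧ ∀ x, AgreeNear Ω D s x → ∀ v,
      kobMetric D x v ≤ (1 + C₃ * logDepth D x ^ (-(1 + ν))) * kobMetric Ω x v := by
  obtain ⟨Λ, hΛ2, hmem⟩ := h.exists_forall_disc_apply_mem hs
  have hR := h.R_pos
  have hν := h.ν_pos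
  let κ := min 1 (s / R)
  have hκ : 0 < κ := by positivity
  refine ⟨max 2 (κ⁻¹ * Λ ^ (1 + ν)), lt_max_of_lt_left two_pos, fun x hx v => ?_⟩
  have hl := one_le_logDepth D x
  have hpow := logDepth_rpow_pos D x (-(1 + ν))
  set Φ := logDepth D x ^ (-(1 + ν))
  have hkΩ := kobMetric_nonneg Ω x v
  have hkD := kobMetric_nonneg D x v
  rcases le_or_gt Λ (logDepth D x) with hdeep | hshallow
  · have hΦ : Φ ≤ 1 / 2 := by
      calc Φ ≤ logDepth D x ^ (-1 : ℝ) := Real.rpow_le_rpow_of_exponent_le hl (by linarith)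
        _ ≤ 1 / 2 := by
          rw [Real.rpow_neg_one, one_div]
          exact inv_anti₀ two_pos (hΛ2.trans hdeep)
    have hle := mul_kobMetric_le_of_forall_disc_mem (v := v) h.isOpen_ambient (h.subset hx.1)
      (by linarith) (by linarith) (hmem x hx hdeep)
    calc kobMetric D x v ≤ (1 + 2 * Φ) * (1 - Φ) * kobMetric D x v :=
          le_mul_of_one_le_left hkD (by nlinarith)
      _ = (1 + 2 * Φ) * ((1 - Φ) * kobMetric D x v) := mul_assoc _ _ _
      _ ≤ (1 + 2 * Φ) * kobMetric Ω x v := by gcongr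
      _ ≤ _ := by gcongr; exact le_max_left _ _
  · have hone := one_le_rpow_mul_rpow_neg (one_pos.trans_le hl) hshallow.le
      (by positivity : 0 ≤ 1 + ν)
    have hle := mul_kobMetric_le_of_forall_disc_mem (v := v) h.isOpen_ambient (h.subset hx.1) hκ
      (min_le_left _ _) fun f hf z hz => hx.apply_mem hf hR h.dist_le hz
    calc kobMetric D x v ≤ κ⁻¹ * kobMetric Ω x v := (le_inv_mul_iff₀ hκ).2 hle
      _ ≤ κ⁻¹ * (Λ ^ (1 + ν) * Φ) * kobMetric Ω x v := by
          gcongr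
          exact le_mul_of_one_le_right (inv_nonneg.2 hκ.le) hone
      _ = κ⁻¹ * Λ ^ (1 + ν) * Φ * kobMetric Ω x v := by ring
      _ ≤ (1 + κ⁻¹ * Λ ^ (1 + ν) * Φ) * kobMetric Ω x v := by gcongr; linarith
      _ ≤ _ := by gcongr; exact le_max_right _ _

end IsLogTypeSubdomain

end Escape

section WeightedLength

variable {k : ℝ → ℝ} {a b c m : ℝ}

theorem integral_comp_primitive_mul_le {w : ℝ → ℝ} (hw : Continuous w) (hw0 : ∀ u, 0 ≤ w u)
    (hab : a ≤ b) (hc : c ∈ uIcc a b) (hk : IntervalIntegrable k volume a b) (hk0 : ∀ t, 0 ≤ k t) :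
    ∫ t in a..b, w (∫ u in c..t, k u) * k t ≤ ∫ x in (∫ u in c..a, k u)..∫ u in c..b, k u, w x := by
  let G : ℝ → ℝ := fun y => ∫ x in 0..y, w x
  have hsub : ∀ x y, G y - G x = ∫ u in x..y, w u := fun x y =>
    intervalIntegral.integral_interval_sub_left (hw.intervalIntegrable _ _)
      (hw.intervalIntegrable _ _)
  have hG : Monotone G := fun x y hxy =>
    sub_nonneg.1 ((intervalIntegral.integral_nonneg hxy fun u _ => hw0 u).trans_eq (hsub x y).symm)
  have hprim : MonotoneOn (fun t => ∫ u in c..t, k u) (uIcc a b) := fun x hx y hy hxy => by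
    have hint : ∀ z ∈ uIcc a b, IntervalIntegrable k volume c z := fun z hz =>
      hk.mono_set (uIcc_subset_uIcc hc hz)
    rw [← sub_nonneg, intervalIntegral.integral_interval_sub_left (hint y hy) (hint x hx)]
    exact intervalIntegral.integral_nonneg hxy fun u _ => hk0 u
  have hmono := hG.comp_monotoneOn hprim
  have hderiv : ∫ t in a..b, deriv (G ∘ fun t => ∫ u in c..t, k u) t =
      ∫ t in a..b, w (∫ u in c..t, k u) * k t := by
    refine intervalIntegral.integral_congr_ae ?_
    filter_upwards [hk.ae_hasDerivAt_integral] with t ht htI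
    exact ((hw.integral_hasStrictDerivAt 0 _).hasDerivAt.comp t
      (ht (uIoc_subset_uIcc htI) c hc)).deriv
  have hle := hmono left_mem_uIcc right_mem_uIcc hab
  have hmem := hmono.intervalIntegral_deriv_mem_uIcc
  rw [uIcc_of_le (sub_nonneg.2 hle), hderiv] at hmem
  exact hmem.2.trans_eq (hsub _ _)

theorem continuous_one_add_abs_rpow (p : ℝ) : Continuous fun u : ℝ => (1 + |u|) ^ p :=
  (continuous_const.add continuous_abs).rpow_const fun u =>
    Or.inl (add_pos_of_pos_of_nonneg one_pos (abs_nonneg u)).ne'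

theorem integral_zero_one_add_abs_rpow_le (hm : 0 < m) (y : ℝ) :
    ∫ u in 0..y, (1 + |u|) ^ (-(1 + m)) ≤ 1 / m := by
  rcases le_total 0 y with hy | hy
  · have hcongr : ∫ u in 0..y, (1 + |u|) ^ (-(1 + m)) = ∫ u in 0..y, (1 + u) ^ (-(1 + m)) :=
      intervalIntegral.integral_congr fun u hu => by
        rw [uIcc_of_le hy] at hu
        simp only [abs_of_nonneg hu.1]
    rw [hcongr, intervalIntegral.integral_comp_add_left (fun u => u ^ (-(1 + m))),
      integral_rpow (Or.inr ⟨by linarith, notMem_uIcc_of_lt (by linarith) (by linarith)⟩),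
      show -(1 + m) + 1 = -m by ring, add_zero, Real.one_rpow, ← neg_div_neg_eq, neg_neg]
    gcongr
    linarith [Real.rpow_nonneg (by linarith : 0 ≤ 1 + y) (-m)]
  · rw [intervalIntegral.integral_symm]
    have hpos : 0 ≤ ∫ u in y..0, (1 + |u|) ^ (-(1 + m)) :=
      intervalIntegral.integral_nonneg hy fun u _ => by positivity
    have : 0 ≤ 1 / m := by positivity
    linarith

theorem integral_one_add_abs_rpow_le (hm : 0 < m) (x y : ℝ) :
    ∫ u in x..y, (1 + |u|) ^ (-(1 + m)) ≤ 2 / m := by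
  have hint : ∀ x y, IntervalIntegrable (fun u : ℝ => (1 + |u|) ^ (-(1 + m))) volume x y :=
    (continuous_one_add_abs_rpow _).intervalIntegrable
  have hreflect : ∫ u in x..0, (1 + |u|) ^ (-(1 + m)) = ∫ u in 0..-x, (1 + |u|) ^ (-(1 + m)) := by
    simpa using intervalIntegral.integral_comp_neg (a := x) (b := 0)
      fun u : ℝ => (1 + |u|) ^ (-(1 + m))
  calc ∫ u in x..y, (1 + |u|) ^ (-(1 + m))
      = (∫ u in 0..-x, (1 + |u|) ^ (-(1 + m))) + ∫ u in 0..y, (1 + |u|) ^ (-(1 + m)) := by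
        rw [← hreflect, intervalIntegral.integral_add_adjacent_intervals (hint _ _) (hint _ _)]
    _ ≤ 1 / m + 1 / m := add_le_add (integral_zero_one_add_abs_rpow_le hm _)
        (integral_zero_one_add_abs_rpow_le hm _)
    _ = 2 / m := by ring

theorem intervalIntegrable_primitive_rpow_mul (hc : c ∈ uIcc a b)
    (hk : IntervalIntegrable k volume a b) (p : ℝ) :
    IntervalIntegrable (fun t => (1 + |∫ u in c..t, k u|) ^ p * k t) volume a b :=
  hk.continuousOn_mul ((continuous_one_add_abs_rpow p).comp_continuousOn
    (intervalIntegral.continuousOn_primitive_interval' hk hc))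

theorem integral_primitive_rpow_mul_le (hm : 0 < m) (hab : a ≤ b) (hc : c ∈ uIcc a b)
    (hk : IntervalIntegrable k volume a b) (hk0 : ∀ t, 0 ≤ k t) :
    ∫ t in a..b, (1 + |∫ u in c..t, k u|) ^ (-(1 + m)) * k t ≤ 2 / m :=
  (integral_comp_primitive_mul_le (continuous_one_add_abs_rpow _) (fun u => by positivity) hab hc hk
    hk0).trans (integral_one_add_abs_rpow_le hm _ _)

theorem rpow_neg_add_le_mul {l₀ l X B p q : ℝ} (hl₀ : 0 < l₀) (hl : l₀ ≤ l) (hX : 0 < X)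
    (hB : 0 < B) (hXl : X ≤ B * l) (hp : 0 ≤ p) (hq : 0 ≤ q) :
    l ^ (-(p + q)) ≤ l₀ ^ (-p) * (B ^ q * X ^ (-q)) := by
  have hlpos := hl₀.trans_le hl
  have hXq : l ^ (-q) ≤ B ^ q * X ^ (-q) := by
    calc l ^ (-q) = B ^ q * (B * l) ^ (-q) := by
          rw [Real.mul_rpow hB.le hlpos.le, ← mul_assoc, ← Real.rpow_add hB, add_neg_cancel,
            Real.rpow_zero, one_mul]
      _ ≤ B ^ q * X ^ (-q) := by
          gcongr ?_ * ?_
          exact Real.rpow_le_rpow_of_nonpos hX hXl (neg_nonpos.2 hq)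
  rw [neg_add, Real.rpow_add hlpos]
  gcongr ?_ * ?_
  exact Real.rpow_le_rpow_of_nonpos hl₀ hl (neg_nonpos.2 hp)

end WeightedLength

section NearMinimal

variable {E : Type*} [NormedAddCommGroup E] [NormedSpace ℂ E] {Ω : Set E} {σ g : ℝ → E}
  {a b c d r u v : ℝ} {x y : E}

/-- A curve each of whose arcs has minimal Kobayashi length in `Ω`, up to the additive error `1`. -/
structure IsNearMinimal (Ω : Set E) (σ g : ℝ → E) (a b : ℝ) : Prop
    extends IsCurveIn Ω σ g a b where
  kobLength_le : ∀ u v, a ≤ u → u ≤ v → v ≤ b → ∀ r, JoinedWithin Ω r (σ u) (σ v) →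
    kobLength Ω σ g u v ≤ r + 1

theorem JoinedWithin.exists_isNearMinimal [SecondCountableTopology E] (h : JoinedWithin Ω r x y)
    (hΩ : IsOpen Ω) :
    ∃ (a b : ℝ) (σ g : ℝ → E), IsNearMinimal Ω σ g a b ∧ σ a = x ∧ σ b = y ∧
      kobLength Ω σ g a b ≤ kobDist Ω x y + 1 := by
  obtain ⟨a, b, σ, g, hσ, hx, hy, hlt⟩ := h.exists_kobLength_lt (lt_add_one (kobDist Ω x y))
  refine ⟨a, b, σ, g, ⟨hσ, fun u v hau huv hvb r hr => ?_⟩, hx, hy, hlt.le⟩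
  have hau' := hσ.restrict le_rfl hau (huv.trans hvb)
  have huv' := hσ.restrict hau huv hvb
  have hvb' := hσ.restrict (hau.trans huv) hvb le_rfl
  have hau_join : JoinedWithin Ω (kobLength Ω σ g a u) (σ a) (σ u) :=
    ⟨a, u, σ, g, hau', rfl, rfl, le_rfl⟩
  have hvb_join : JoinedWithin Ω (kobLength Ω σ g v b) (σ v) (σ b) :=
    ⟨v, b, σ, g, hvb', rfl, rfl, le_rfl⟩
  have hdist := (hau_join.trans (hr.trans hvb_join hΩ) hΩ).kobDist_le
  have hsplit := hau'.kobLength_append (huv'.append hvb') hΩ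
  rw [huv'.kobLength_append hvb' hΩ] at hsplit
  rw [hx, hy] at hdist
  linarith

namespace IsNearMinimal

theorem restrict (h : IsNearMinimal Ω σ g a b) (hac : a ≤ c) (hcd : c ≤ d) (hdb : d ≤ b) :
    IsNearMinimal Ω σ g c d :=
  ⟨h.toIsCurveIn.restrict hac hcd hdb, fun u v hcu huv hvd =>
    h.kobLength_le u v (hac.trans hcu) huv (hvd.trans hdb)⟩

theorem comp_neg (h : IsNearMinimal Ω σ g a b) (hΩ : IsOpen Ω) :
    IsNearMinimal Ω (fun t => σ (-t)) (fun t => -g (-t)) (-b) (-a) := by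
  refine ⟨h.toIsCurveIn.comp_neg, fun u v hbu huv hva r hr => ?_⟩
  have hav := le_neg.1 hva
  have hub := neg_le.1 hbu
  have harc := h.toIsCurveIn.restrict hav (neg_le_neg huv) hub
  have hlen := harc.kobLength_comp_neg hΩ
  rw [neg_neg, neg_neg] at hlen
  exact hlen.trans_le (h.kobLength_le _ _ hav (neg_le_neg huv) hub r (hr.symm hΩ))

theorem abs_kobLength_le (h : IsNearMinimal Ω σ g a b) (hΩ : IsOpen Ω) (hu : u ∈ Icc a b)
    (hv : v ∈ Icc a b) (hr : JoinedWithin Ω r (σ u) (σ v)) : |kobLength Ω σ g u v| ≤ r + 1 := by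
  rcases le_total u v with huv | hvu
  · rw [abs_of_nonneg (kobLength_nonneg huv)]
    exact h.kobLength_le u v hu.1 huv hv.2 r hr
  · rw [kobLength, intervalIntegral.integral_symm, abs_neg, ← kobLength,
      abs_of_nonneg (kobLength_nonneg hvu)]
    exact h.kobLength_le v u hv.1 hvu hu.2 r (hr.symm hΩ)

end IsNearMinimal

end NearMinimal

section Transfer

variable {E : Type*} [NormedAddCommGroup E] [NormedSpace ℂ E] {Ω D : Set E}
  {r c M R C ν s s₀ a b : ℝ} {x : E} {σ g : ℝ → E}

namespace IsLogTypeSubdomain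

theorem exists_one_add_abs_kobLength_le [ProperSpace E]
    (h : IsLogTypeSubdomain Ω D r c M R C ν) :
    ∃ B, 0 < B ∧ ∀ (σ g : ℝ → E) (a b : ℝ), IsNearMinimal Ω σ g a b → ∀ u ∈ Icc a b,
      ∀ v ∈ Icc a b, σ u ∈ D → σ v ∈ D → logDepth D (σ u) ≤ logDepth D (σ v) →
        1 + |kobLength Ω σ g u v| ≤ B * logDepth D (σ v) := by
  obtain ⟨A, hA, hjoin⟩ := h.exists_joinedWithin_logDepth
  refine ⟨2 * A + 2, by positivity, fun σ g a b hσ u hu v hv huD hvD hle => ?_⟩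
  have hlen := hσ.abs_kobLength_le h.isOpen_ambient hu hv
    ((hjoin _ huD _ hvD).mono_set h.isOpen h.subset)
  linarith [one_le_logDepth D (σ v), mul_le_mul_of_nonneg_left hle hA.le]

theorem intervalIntegrable_rpow_logDepth_mul [SecondCountableTopology E]
    (h : IsLogTypeSubdomain Ω D r c M R C ν) (hσ : IsCurveIn Ω σ g a b)
    (hσD : MapsTo σ (Icc a b) D) (p : ℝ) :
    IntervalIntegrable (fun t => logDepth D (σ t) ^ p * kobMetric Ω (σ t) (g t)) volume a b := by
  refine (hσ.intervalIntegrable_kobMetric h.isOpen_ambient).continuousOn_mul ?_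
  rw [uIcc_of_le hσ.le]
  exact (h.continuousOn_logDepth.comp hσ.continuousOn hσD).rpow_const fun t _ =>
    Or.inl (one_pos.trans_le (one_le_logDepth D (σ t))).ne'

/- Measured from its point of least depth `l₀`, a near-minimal curve has arc length at most a
multiple of the depth. Since `1 + ν > 1`, the depth weight is therefore integrable in arc length,
with the power `l₀ ^ (-(ν / 2))` to spare. -/
theorem exists_integral_rpow_logDepth_le [ProperSpace E]
    (h : IsLogTypeSubdomain Ω D r c M R C ν) :
    ∃ K, 0 < K ∧ ∀ (σ g : ℝ → E) (a b : ℝ), IsNearMinimal Ω σ g a b → MapsTo σ (Icc a b) D →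
      ∃ t₀ ∈ Icc a b, ∫ t in a..b, logDepth D (σ t) ^ (-(1 + ν)) * kobMetric Ω (σ t) (g t) ≤
        K * logDepth D (σ t₀) ^ (-(ν / 2)) := by
  obtain ⟨B, hB, hlen⟩ := h.exists_one_add_abs_kobLength_le
  have hν := h.ν_pos
  refine ⟨B ^ (1 + ν / 2) * (2 / (ν / 2)), by positivity, fun σ g a b hσ hσD => ?_⟩
  obtain ⟨t₀, ht₀, hmax⟩ := isCompact_Icc.exists_isMaxOn (nonempty_Icc.2 hσ.le)
    ((continuous_infDist_pt (frontier D)).comp_continuousOn hσ.continuousOn)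
  have ht₀' : t₀ ∈ uIcc a b := by rwa [uIcc_of_le hσ.le]
  have hk := hσ.intervalIntegrable_kobMetric h.isOpen_ambient
  let k : ℝ → ℝ := fun t => kobMetric Ω (σ t) (g t)
  let w : ℝ → ℝ := fun t => (1 + |∫ u in t₀..t, k u|) ^ (-(1 + ν / 2))
  have hweight : ∀ t ∈ Icc a b, logDepth D (σ t) ^ (-(1 + ν)) ≤
      logDepth D (σ t₀) ^ (-(ν / 2)) * (B ^ (1 + ν / 2) * w t) := fun t ht => by
    have hdepth := h.logDepth_le_logDepth (hσD ht) (hmax ht)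
    rw [show 1 + ν = ν / 2 + (1 + ν / 2) by ring]
    exact rpow_neg_add_le_mul (one_pos.trans_le (one_le_logDepth _ _)) hdepth (by positivity) hB
      (hlen σ g a b hσ t₀ ht₀ t ht (hσD ht₀) (hσD ht) hdepth) (by positivity) (by positivity)
  refine ⟨t₀, ht₀, ?_⟩
  calc ∫ t in a..b, logDepth D (σ t) ^ (-(1 + ν)) * k t
      ≤ ∫ t in a..b, logDepth D (σ t₀) ^ (-(ν / 2)) * B ^ (1 + ν / 2) * (w t * k t) := by
        refine intervalIntegral.integral_mono_on hσ.le
          (h.intervalIntegrable_rpow_logDepth_mul hσ.toIsCurveIn hσD _)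
          ((intervalIntegrable_primitive_rpow_mul ht₀' hk _).const_mul _) fun t ht => ?_
        exact (mul_le_mul_of_nonneg_right (hweight t ht) (kobMetric_nonneg _ _ _)).trans_eq
          (by ring)
    _ = logDepth D (σ t₀) ^ (-(ν / 2)) * B ^ (1 + ν / 2) * ∫ t in a..b, w t * k t :=
        intervalIntegral.integral_const_mul _ _
    _ ≤ logDepth D (σ t₀) ^ (-(ν / 2)) * B ^ (1 + ν / 2) * (2 / (ν / 2)) := by
        have hdepth := logDepth_rpow_pos D (σ t₀) (-(ν / 2))
        gcongr
        exact integral_primitive_rpow_mul_le (by positivity) hσ.le ht₀' hk fun _ =>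
          kobMetric_nonneg _ _ _
    _ = B ^ (1 + ν / 2) * (2 / (ν / 2)) * logDepth D (σ t₀) ^ (-(ν / 2)) := by ring

theorem exists_kobLength_le [ProperSpace E] (h : IsLogTypeSubdomain Ω D r c M R C ν)
    (hs : 0 < s) :
    ∃ K, 0 < K ∧ ∀ (σ g : ℝ → E) (a b : ℝ), IsNearMinimal Ω σ g a b →
      (∀ t ∈ Icc a b, AgreeNear Ω D s (σ t)) →
        kobLength D σ g a b ≤ kobLength Ω σ g a b + K := by
  obtain ⟨K, hK, hint⟩ := h.exists_integral_rpow_logDepth_le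
  obtain ⟨C₃, hC₃, hkob⟩ := h.exists_kobMetric_le hs
  refine ⟨C₃ * K, by positivity, fun σ g a b hσ hagree => ?_⟩
  have hσD : MapsTo σ (Icc a b) D := fun t ht => (hagree t ht).1
  have hcurve : IsCurveIn D σ g a b := ⟨hσ.le, hσ.ac, hσD⟩
  obtain ⟨t₀, -, ht₀⟩ := hint σ g a b hσ hσD
  have hk := hσ.intervalIntegrable_kobMetric h.isOpen_ambient
  have hwk := (h.intervalIntegrable_rpow_logDepth_mul hσ.toIsCurveIn hσD (-(1 + ν))).const_mul C₃
  calc kobLength D σ g a b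
      ≤ ∫ t in a..b, (kobMetric Ω (σ t) (g t) +
          C₃ * (logDepth D (σ t) ^ (-(1 + ν)) * kobMetric Ω (σ t) (g t))) := by
        refine intervalIntegral.integral_mono_on hσ.le
          (hcurve.intervalIntegrable_kobMetric h.isOpen) (hk.add hwk) fun t ht => ?_
        exact (hkob _ (hagree t ht) (g t)).trans_eq (by ring)
    _ = kobLength Ω σ g a b +
          C₃ * ∫ t in a..b, logDepth D (σ t) ^ (-(1 + ν)) * kobMetric Ω (σ t) (g t) := by
        rw [intervalIntegral.integral_add hk hwk, intervalIntegral.integral_const_mul, kobLength]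
    _ ≤ kobLength Ω σ g a b + C₃ * K := by
        gcongr
        refine ht₀.trans (mul_le_of_le_one_right hK.le ?_)
        exact Real.rpow_le_one_of_one_le_of_nonpos (one_le_logDepth _ _)
          (neg_nonpos.2 (half_pos h.ν_pos).le)

theorem exists_joinedWithin_of_agreeNear [ProperSpace E]
    (h : IsLogTypeSubdomain Ω D r c M R C ν) (hs : 0 < s) :
    ∃ K, 0 < K ∧ ∀ (σ g : ℝ → E) (a b : ℝ), IsNearMinimal Ω σ g a b →
      (∀ t ∈ Icc a b, AgreeNear Ω D s (σ t)) →
        JoinedWithin D (kobLength Ω σ g a b + K) (σ a) (σ b) := by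
  obtain ⟨K, hK, hle⟩ := h.exists_kobLength_le hs
  exact ⟨K, hK, fun σ g a b hσ hagree => ⟨a, b, σ, g,
    ⟨hσ.le, hσ.ac, fun t ht => (hagree t ht).1⟩, rfl, rfl, hle σ g a b hσ hagree⟩⟩

theorem exists_dist_le_mul_rpow_logDepth [ProperSpace E]
    (h : IsLogTypeSubdomain Ω D r c M R C ν) (hs : 0 < s) :
    ∃ K, 0 < K ∧ ∀ (σ g : ℝ → E) (a b : ℝ), IsNearMinimal Ω σ g a b →
      (∀ t ∈ Icc a b, AgreeNear Ω D s (σ t)) →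
        ∃ t ∈ Icc a b, dist (σ b) (σ a) ≤ K * logDepth D (σ t) ^ (-(ν / 2)) := by
  obtain ⟨K, hK, hint⟩ := h.exists_integral_rpow_logDepth_le
  obtain ⟨C₂, hC₂, hnorm⟩ := h.exists_norm_le_kobMetric hs
  refine ⟨C₂ * K, by positivity, fun σ g a b hσ hagree => ?_⟩
  have hσD : MapsTo σ (Icc a b) D := fun t ht => (hagree t ht).1
  obtain ⟨t₀, ht₀, hle⟩ := hint σ g a b hσ hσD
  refine ⟨t₀, ht₀, ?_⟩
  calc dist (σ b) (σ a) = ‖∫ t in a..b, g t‖ := by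
        rw [dist_eq_norm, hσ.ac.2 b (right_mem_Icc.2 hσ.le), add_sub_cancel_left]
    _ ≤ ∫ t in a..b, ‖g t‖ := intervalIntegral.norm_integral_le_integral_norm hσ.le
    _ ≤ ∫ t in a..b, C₂ * (logDepth D (σ t) ^ (-(1 + ν)) * kobMetric Ω (σ t) (g t)) := by
        refine intervalIntegral.integral_mono_on hσ.le hσ.ac.1.norm
          ((h.intervalIntegrable_rpow_logDepth_mul hσ.toIsCurveIn hσD _).const_mul C₂)
          fun t ht => ?_
        exact (hnorm _ (hagree t ht) (g t)).trans_eq (mul_assoc _ _ _)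
    _ = C₂ * ∫ t in a..b, logDepth D (σ t) ^ (-(1 + ν)) * kobMetric Ω (σ t) (g t) :=
        intervalIntegral.integral_const_mul _ _
    _ ≤ C₂ * K * logDepth D (σ t₀) ^ (-(ν / 2)) := by
        rw [mul_assoc]
        gcongr

theorem exists_logDepth_le [ProperSpace E] (h : IsLogTypeSubdomain Ω D r c M R C ν) (hs : 0 < s)
    (hs₀ : 0 < s₀) :
    ∃ Λ, 0 < Λ ∧ ∀ (σ g : ℝ → E) (a b : ℝ), IsNearMinimal Ω σ g a b →
      (∀ t ∈ Icc a b, AgreeNear Ω D s (σ t)) → s₀ ≤ dist (σ b) (σ a) →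
        ∃ t ∈ Icc a b, logDepth D (σ t) ≤ Λ := by
  obtain ⟨K, hK, hdist⟩ := h.exists_dist_le_mul_rpow_logDepth hs
  have hν := half_pos h.ν_pos
  refine ⟨(K / s₀) ^ (ν / 2)⁻¹, by positivity, fun σ g a b hσ hagree hfar => ?_⟩
  obtain ⟨t, ht, hle⟩ := hdist σ g a b hσ hagree
  have hl : 0 < logDepth D (σ t) := one_pos.trans_le (one_le_logDepth _ _)
  refine ⟨t, ht, (Real.le_rpow_inv_iff_of_pos hl.le (by positivity) hν).2 ?_⟩
  rw [le_div_iff₀ hs₀, mul_comm, ← le_div_iff₀ (Real.rpow_pos_of_pos hl _), div_eq_mul_inv,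
    ← Real.rpow_neg hl.le]
  exact hfar.trans hle

theorem exists_initial_arc [ProperSpace E] (h : IsLogTypeSubdomain Ω D r c M R C ν)
    (hs : 0 < s) :
    ∃ K, 0 < K ∧ ∀ (σ g : ℝ → E) (a b : ℝ), IsNearMinimal Ω σ g a b → AgreeNear Ω D s (σ a) →
      s / 2 ≤ dist (σ b) (σ a) → ∃ t ∈ Icc a b, σ t ∈ D ∧ logDepth D (σ t) ≤ K ∧
        JoinedWithin D (kobLength Ω σ g a t + K) (σ a) (σ t) := by
  obtain ⟨Λ, hΛ, hvis⟩ := h.exists_logDepth_le (half_pos hs) (half_pos hs)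
  obtain ⟨K, -, hjoin⟩ := h.exists_joinedWithin_of_agreeNear (half_pos hs)
  refine ⟨max Λ K, lt_max_of_lt_left hΛ, fun σ g a b hσ ha hfar => ?_⟩
  have hcont : ContinuousOn (fun t => dist (σ t) (σ a)) (Icc a b) :=
    (continuous_id.dist continuous_const).comp_continuousOn hσ.continuousOn
  obtain ⟨t₁, ht₁, hexit, hbefore⟩ := exists_eq_and_forall_Ico_lt hσ.le hcont
    (by simpa only [dist_self] using (half_pos hs).le) hfar
  have hagree : ∀ t ∈ Icc a t₁, AgreeNear Ω D (s / 2) (σ t) := fun t ht => by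
    refine ha.half hs (hσ.mapsTo ⟨ht.1, ht.2.trans ht₁.2⟩) ?_
    rcases ht.2.eq_or_lt with rfl | hlt
    · exact hexit.le
    · exact (hbefore t ⟨ht.1, hlt⟩).le
  obtain ⟨t, ht, hle⟩ := hvis σ g a t₁ (hσ.restrict le_rfl ht₁.1 ht₁.2) hagree hexit.ge
  have htb := ht.2.trans ht₁.2
  refine ⟨t, ⟨ht.1, htb⟩, (hagree t ht).1, hle.trans (le_max_left _ _), ?_⟩
  refine (hjoin σ g a t (hσ.restrict le_rfl ht.1 htb) fun u hu =>
    hagree u ⟨hu.1, hu.2.trans ht.2⟩).mono ?_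
  gcongr
  exact le_max_right _ _

theorem exists_final_arc [ProperSpace E] (h : IsLogTypeSubdomain Ω D r c M R C ν)
    (hs : 0 < s) :
    ∃ K, 0 < K ∧ ∀ (σ g : ℝ → E) (a b : ℝ), IsNearMinimal Ω σ g a b → AgreeNear Ω D s (σ b) →
      s / 2 ≤ dist (σ a) (σ b) → ∃ t ∈ Icc a b, σ t ∈ D ∧ logDepth D (σ t) ≤ K ∧
        JoinedWithin D (kobLength Ω σ g t b + K) (σ t) (σ b) := by
  obtain ⟨K, hK, harc⟩ := h.exists_initial_arc hs
  refine ⟨K, hK, fun σ g a b hσ hb hfar => ?_⟩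
  obtain ⟨t, ht, htD, hdepth, hjoin⟩ := harc _ _ _ _ (hσ.comp_neg h.isOpen_ambient)
    (by rwa [neg_neg]) (by rwa [neg_neg, neg_neg])
  have hat := le_neg.1 ht.2
  have htb := neg_le.1 ht.1
  have hlen := (hσ.toIsCurveIn.restrict hat htb le_rfl).kobLength_comp_neg h.isOpen_ambient
  rw [neg_neg] at hlen
  rw [hlen, neg_neg] at hjoin
  exact ⟨-t, ⟨hat, htb⟩, htD, hdepth, hjoin.symm h.isOpen⟩

theorem exists_joinedWithin_of_excursion [ProperSpace E]
    (h : IsLogTypeSubdomain Ω D r c M R C ν) (hs : 0 < s) :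
    ∃ K, 0 < K ∧ ∀ (σ g : ℝ → E) (a b : ℝ), IsNearMinimal Ω σ g a b → AgreeNear Ω D s (σ a) →
      AgreeNear Ω D s (σ b) → ∀ t ∈ Icc a b, s / 2 ≤ dist (σ t) (σ a) →
        s / 2 ≤ dist (σ t) (σ b) → JoinedWithin D (kobLength Ω σ g a b + K) (σ a) (σ b) := by
  obtain ⟨A, hA, hjoin⟩ := h.exists_joinedWithin_logDepth
  obtain ⟨K₁, hK₁, hinit⟩ := h.exists_initial_arc hs
  obtain ⟨K₂, hK₂, hfinal⟩ := h.exists_final_arc hs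
  refine ⟨K₁ + K₂ + A * (K₁ + K₂), by positivity, fun σ g a b hσ ha hb t ht hta htb => ?_⟩
  obtain ⟨u, hu, huD, hudepth, hau⟩ := hinit σ g a t (hσ.restrict le_rfl ht.1 ht.2) ha hta
  obtain ⟨v, hv, hvD, hvdepth, hvb⟩ := hfinal σ g t b (hσ.restrict ht.1 ht.2 le_rfl) hb htb
  have huv := hu.2.trans hv.1
  have hcurve := hσ.toIsCurveIn
  have hau' := hcurve.restrict le_rfl hu.1 (huv.trans hv.2)
  have huv' := hcurve.restrict hu.1 huv hv.2
  have hvb' := hcurve.restrict (hu.1.trans huv) hv.2 le_rfl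
  have hsplit := hau'.kobLength_append (huv'.append hvb') h.isOpen_ambient
  rw [huv'.kobLength_append hvb' h.isOpen_ambient] at hsplit
  have hmiddle : A * (logDepth D (σ u) + logDepth D (σ v)) ≤ A * (K₁ + K₂) := by gcongr
  refine (hau.trans ((hjoin _ huD _ hvD).trans hvb h.isOpen) h.isOpen).mono ?_
  linarith [kobLength_nonneg (D := Ω) (σ := σ) (g := g) huv]

theorem exists_kobDist_le [ProperSpace E] (h : IsLogTypeSubdomain Ω D r c M R C ν) (hs : 0 < s) :
    ∃ K, 0 < K ∧ ∀ p q, AgreeNear Ω D s p → AgreeNear Ω D s q →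
      kobDist D p q ≤ kobDist Ω p q + K := by
  obtain ⟨A, -, hjoin⟩ := h.exists_joinedWithin_logDepth
  obtain ⟨K₁, hK₁, hlocal⟩ := h.exists_joinedWithin_of_agreeNear (half_pos hs)
  obtain ⟨K₂, hK₂, hexcursion⟩ := h.exists_joinedWithin_of_excursion hs
  refine ⟨1 + (K₁ + K₂), by positivity, fun p q hp hq => ?_⟩
  obtain ⟨a, b, σ, g, hσ, rfl, rfl, hlen⟩ :=
    ((hjoin p hp.1 q hq.1).mono_set h.isOpen h.subset).exists_isNearMinimal h.isOpen_ambient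
  suffices hD : JoinedWithin D (kobLength Ω σ g a b + (K₁ + K₂)) (σ a) (σ b) by
    linarith [hD.kobDist_le]
  by_cases hclose : ∀ t ∈ Icc a b, dist (σ t) (σ a) ≤ s / 2 ∨ dist (σ t) (σ b) ≤ s / 2
  · refine (hlocal σ g a b hσ fun t ht => ?_).mono (by linarith)
    exact (hclose t ht).elim (hp.half hs (hσ.mapsTo ht)) (hq.half hs (hσ.mapsTo ht))
  · push Not at hclose
    obtain ⟨t, ht, hta, htb⟩ := hclose
    exact (hexcursion σ g a b hσ hp hq t ht hta.le htb.le).mono (by linarith)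

end IsLogTypeSubdomain

end Transfer

theorem LogTypeCConvex.exists_isLogTypeSubdomain {E : Type*} [NormedAddCommGroup E]
    [NormedSpace ℂ E] [ProperSpace E] [Nontrivial E] {Ω U : Set E}
    (hlog : LogTypeCConvex (Ω ∩ U)) (hΩo : IsOpen Ω) (hΩb : Bornology.IsBounded Ω)
    (hC1 : ∀ ξ ∈ frontier (Ω ∩ U), ∃ W ρ, IsLocalDefiningFn (Ω ∩ U) ξ W ρ) :
    ∃ r c M R C ν, IsLogTypeSubdomain Ω (Ω ∩ U) r c M R C ν := by
  obtain ⟨hDo, hDne, hDb, hDC, C, ν, hC, hν, hlogD⟩ := hlog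
  obtain ⟨r, c, M, hcone⟩ := exists_isConeDomain hDo hDne hDb hDC hC1
  obtain ⟨R, hR⟩ := Metric.isBounded_iff.1 hΩb
  exact ⟨r, c, M, max 1 R, C, ν,
    { toIsConeDomain := hcone
      isOpen_ambient := hΩo
      subset := inter_subset_left
      R_pos := lt_max_of_lt_left one_pos
      dist_le := fun x hx y hy => (hR hx hy).trans (le_max_right _ _)
      C_pos := hC
      ν_pos := hν
      bdistDir_le := hlogD }⟩

theorem exists_forall_agreeNear {E : Type*} [PseudoMetricSpace E] [ProperSpace E] {Ω U V : Set E}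
    (hΩb : Bornology.IsBounded Ω) (hU : IsOpen U)
    (hV : closure V ⊆ U) : ∃ s, 0 < s ∧ ∀ p ∈ V ∩ Ω, AgreeNear Ω (Ω ∩ U) s p := by
  obtain ⟨s, hs, hsU⟩ := (hΩb.subset inter_subset_right).isCompact_closure
    |>.exists_thickening_subset_open hU ((closure_mono inter_subset_left).trans hV)
  refine ⟨s, hs, fun p hp => ⟨⟨hp.2, hV (subset_closure hp.1)⟩, fun z hz => ⟨hz.2, hsU ?_⟩⟩⟩
  exact ball_subset_thickening (subset_closure hp) s hz.1

theorem statement_8_general {E : Type*} [NormedAddCommGroup E] [NormedSpace ℂ E] [ProperSpace E]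
    [Nontrivial E] {Ω U V : Set E} (hΩo : IsOpen Ω) (hΩb : Bornology.IsBounded Ω)
    (hU : IsOpen U) (hlog : LogTypeCConvex (Ω ∩ U))
    (hC1 : ∀ ξ ∈ frontier (Ω ∩ U), ∃ W ρ, IsLocalDefiningFn (Ω ∩ U) ξ W ρ)
    (hV : closure V ⊆ U) :
    ∃ K : ℝ, 0 < K ∧ ∀ p ∈ V ∩ Ω, ∀ q ∈ V ∩ Ω,
      kobDist Ω p q ≤ kobDist (Ω ∩ U) p q ∧ kobDist (Ω ∩ U) p q ≤ kobDist Ω p q + K := by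
  obtain ⟨r, c, M, R, C, ν, h⟩ := hlog.exists_isLogTypeSubdomain hΩo hΩb hC1
  obtain ⟨s, hs, hagree⟩ := exists_forall_agreeNear hΩb hU hV
  obtain ⟨K, hK, hle⟩ := h.exists_kobDist_le hs
  obtain ⟨A, -, hjoin⟩ := h.exists_joinedWithin_logDepth
  exact ⟨K, hK, fun p hp q hq =>
    ⟨kobDist_anti_set h.isOpen h.subset (hjoin p (hagree p hp).1 q (hagree q hq).1),
      hle p q (hagree p hp) (hagree q hq)⟩⟩

theorem statement_8 {n : ℕ} (hn : 2 ≤ n)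
    (Ω U : Set (EuclideanSpace ℂ (Fin n)))
    (hΩo : IsOpen Ω) (hΩc : IsConnected Ω) (hΩb : Bornology.IsBounded Ω)
    (hUo : IsOpen U)
    (hlog : LogTypeCConvex (Ω ∩ U))
    (hdini : ∀ x ∈ frontier (Ω ∩ U), DiniSmoothBoundaryPoint (Ω ∩ U) x)
    (V : Set (EuclideanSpace ℂ (Fin n))) (hVo : IsOpen V) (hVU : V ⊆ U)
    (hclV : closure V ⊆ U) :
    ∃ K : ℝ, 0 < K ∧ ∀ p ∈ V ∩ Ω, ∀ q ∈ V ∩ Ω,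
      kobDist Ω p q ≤ kobDist (Ω ∩ U) p q ∧
      kobDist (Ω ∩ U) p q ≤ kobDist Ω p q + K := by
  have : NeZero n := ⟨by lia⟩
  exact statement_8_general hΩo hΩb hUo hlog
    (fun ξ hξ => let ⟨W, ρ, _, hρ, _⟩ := hdini ξ hξ; ⟨W, ρ, hρ⟩) hclV
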